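/- arXiv:1906.00907 — 2 statements merged into one kernel-verified Lean document; each statement's English description precedes it below -/
import Mathlib

section
/- Let n be a positive even integer. There exists a unique family of polynomials {𝔊^Sp_z}_{z ∈ I^FPF_n} in ℤ[β][x_1,…,x_n] such that 𝔊^Sp_{n⋯321} = ∏_{1 ≤ i < j ≤ n−i} (x_i + x_j + β x_i x_j), where n⋯321 denotes the order-reversing permutation i ↦ n+1−i, and such that ∂_i^{(β)} 𝔊^Sp_z = 𝔊^Sp_{s_i z s_i} for every z ∈ I^FPF_n and every i ∈ [n−1] with i+1 ≠ z(i) > z(i+1) ≠ i. -/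
open MvPolynomial

noncomputable section

/-- The coefficient ring `ℤ[β]`. -/
abbrev Rb : Type := Polynomial ℤ

/-- The indeterminate `β`. -/
def bb : Rb := Polynomial.X

/-- The order-reversing permutation `n⋯321`, i.e. `i ↦ n+1-i` in 1-indexed notation. -/
def revPerm (n : ℕ) : Equiv.Perm (Fin n) :=
  ⟨Fin.rev, Fin.rev, fun i => Fin.rev_rev i, fun i => Fin.rev_rev i⟩

/-- `z` is a fixed-point-free involution. -/
def IsFPF {n : ℕ} (z : Equiv.Perm (Fin n)) : Prop :=
  z * z = 1 ∧ ∀ i, z i ≠ i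

/-- `x_i + x_j + β x_i x_j`. -/
def oplus {n : ℕ} (i j : Fin n) : MvPolynomial (Fin n) Rb :=
  X i + X j + C bb * (X i * X j)

/-- `IsDivDiffB i j f g` encodes `∂_i^{(β)} f = g` where `j = i+1`:
`∂_i^{(β)} f = ((1+βx_j) f - s_i((1+βx_j) f)) / (x_i - x_j)`, stated multiplicatively
(the quotient is exact, and `g` is uniquely determined since the ring is a domain). -/
def IsDivDiffB {n : ℕ} (i j : Fin n) (f g : MvPolynomial (Fin n) Rb) : Prop :=
  (X i - X j) * g =
    (1 + C bb * X j) * f - rename ⇑(Equiv.swap i j) ((1 + C bb * X j) * f)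

/-- `∏_{1 ≤ i < j ≤ n-i} (x_i + x_j + β x_i x_j)` (variables 0-indexed). -/
def spTop (n : ℕ) : MvPolynomial (Fin n) Rb :=
  ∏ p ∈ Finset.univ.filter
      (fun p : Fin n × Fin n => p.1 < p.2 ∧ (p.1 : ℕ) + (p.2 : ℕ) + 2 ≤ n),
    oplus p.1 p.2

/-- `x_1^{n-1} x_2^{n-2} ⋯ x_{n-1}^1` (variables 0-indexed). -/
def grTop (n : ℕ) : MvPolynomial (Fin n) Rb :=
  ∏ a : Fin n, X a ^ (n - 1 - (a : ℕ))

/-- The defining property of the family of symplectic Grothendieck polynomials. -/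
def IsSpFam (n : ℕ) (G : Equiv.Perm (Fin n) → MvPolynomial (Fin n) Rb) : Prop :=
  G (revPerm n) = spTop n ∧
    ∀ z : Equiv.Perm (Fin n), IsFPF z →
      ∀ i j : Fin n, (j : ℕ) = (i : ℕ) + 1 →
        z i ≠ j → z j ≠ i → z j < z i →
          IsDivDiffB i j (G z) (G (Equiv.swap i j * z * Equiv.swap i j))

/-- The defining property of the family of Grothendieck polynomials. -/
def IsGrothFam (n : ℕ) (G : Equiv.Perm (Fin n) → MvPolynomial (Fin n) Rb) : Prop :=
  G (revPerm n) = grTop n ∧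
    ∀ (w : Equiv.Perm (Fin n)) (i j : Fin n), (j : ℕ) = (i : ℕ) + 1 →
      w j < w i → IsDivDiffB i j (G w) (G (w * Equiv.swap i j))

/-- The length (number of inversions) of a permutation. -/
def invLen {n : ℕ} (w : Equiv.Perm (Fin n)) : ℕ :=
  (Finset.univ.filter (fun p : Fin n × Fin n => p.1 < p.2 ∧ w p.2 < w p.1)).card

/-- The fixed-point-free involution length `ℓ_fpf(z) = #{(i,j) : z(i) > z(j) < i < j}`. -/
def fpfLen {n : ℕ} (z : Equiv.Perm (Fin n)) : ℕ :=
  (Finset.univ.filter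
      (fun p : Fin n × Fin n => z p.2 < z p.1 ∧ z p.2 < p.1 ∧ p.1 < p.2)).card

/-- The underlying function of `Θ = (1,2)(3,4)⋯(n-1,n)`. -/
def thetaFun (n : ℕ) (hn : n % 2 = 0) (i : Fin n) : Fin n :=
  ⟨if (i : ℕ) % 2 = 0 then (i : ℕ) + 1 else (i : ℕ) - 1, by
    have hi := i.isLt
    split_ifs with h <;> omega⟩

/-- The fixed-point-free involution `Θ = (1,2)(3,4)⋯(n-1,n)`. -/
def theta (n : ℕ) (hn : n % 2 = 0) : Equiv.Perm (Fin n) :=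
  Function.Involutive.toPerm (thetaFun n hn) (by
    intro i
    have hi := i.isLt
    apply Fin.ext
    simp only [thetaFun]
    split_ifs <;> omega)

/-- One step of the partial Hecke action: `heckeStep a z = some (z · s_{a+1})` when defined,
with `a` a 0-indexed letter (so `a` corresponds to the simple transposition of `a+1, a+2`
in 1-indexed notation). -/
def heckeStep {n : ℕ} (a : ℕ) (z : Equiv.Perm (Fin n)) : Option (Equiv.Perm (Fin n)) :=
  if h : a + 1 < n then
    let i : Fin n := ⟨a, Nat.lt_of_succ_lt h⟩
    let j : Fin n := ⟨a + 1, h⟩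
    if z i < z j then some (Equiv.swap i j * z * Equiv.swap i j)
    else if z i = j ∧ z j = i then none
    else if z i ≠ j ∧ z j ≠ i ∧ z j < z i then some z
    else none
  else none

/-- Apply a word of (0-indexed) letters to `z` via the partial Hecke action. -/
def heckeApply {n : ℕ} (l : List ℕ) (z : Equiv.Perm (Fin n)) :
    Option (Equiv.Perm (Fin n)) :=
  l.foldl (fun o a => o.bind (heckeStep a)) (some z)

/-- The simple transposition corresponding to the 0-indexed letter `a`. -/
def swapAt (n : ℕ) (a : ℕ) : Equiv.Perm (Fin n) :=
  if h : a + 1 < n then Equiv.swap ⟨a, Nat.lt_of_succ_lt h⟩ ⟨a + 1, h⟩ else 1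

/-- The permutation `s_{i_1} s_{i_2} ⋯ s_{i_l}` of a word. -/
def wordToPerm (n : ℕ) (l : List ℕ) : Equiv.Perm (Fin n) := (l.map (swapAt n)).prod

/-- `l` is a reduced word for `w`. -/
def IsReducedWord (n : ℕ) (w : Equiv.Perm (Fin n)) (l : List ℕ) : Prop :=
  (∀ a ∈ l, a + 1 < n) ∧ wordToPerm n l = w ∧ l.length = invLen w

/-- The set of Hecke atoms `B_fpf(z)`. -/
def Bfpf (n : ℕ) (hn : n % 2 = 0) (z : Equiv.Perm (Fin n)) :
    Finset (Equiv.Perm (Fin n)) :=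
  @Finset.filter _
    (fun w => ∃ l : List ℕ, IsReducedWord n w l ∧ heckeApply l (theta n hn) = some z)
    (Classical.decPred _) Finset.univ

/-- `extPerm z w` is the permutation `z × w` acting on the first `m` letters by `z`
and the last `n` letters by `w`. -/
def extPerm {m n : ℕ} (z : Equiv.Perm (Fin m)) (w : Equiv.Perm (Fin n)) :
    Equiv.Perm (Fin (m + n)) :=
  finSumFinEquiv.symm.trans ((Equiv.sumCongr z w).trans finSumFinEquiv)

/-- `rank(z_{[i][j]}) = #{k ∈ [j] : z(k) ≤ i}` (1-indexed sizes `i, j`). -/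
def permRank {n : ℕ} (z : Equiv.Perm (Fin n)) (i j : ℕ) : ℕ :=
  (Finset.univ.filter (fun k : Fin n => (k : ℕ) < j ∧ ((z k : Fin n) : ℕ) < i)).card

/-- The rank of the upper-left `i × j` corner of `A` (1-indexed sizes `i, j ≤ n`). -/
def cornerRank {n : ℕ} (A : Matrix (Fin n) (Fin n) ℂ) (i j : ℕ) : ℕ :=
  Matrix.rank (Matrix.of fun (a : Fin (min i n)) (b : Fin (min j n)) =>
    A ⟨(a : ℕ), lt_of_lt_of_le a.isLt (min_le_right i n)⟩
      ⟨(b : ℕ), lt_of_lt_of_le b.isLt (min_le_right j n)⟩)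

/-- The orthogonal Rothe diagram `D^O(z) = {(i, z(j)) : z(i) > z(j) ≤ i < j}` (0-indexed). -/
def DO (n : ℕ) (z : Equiv.Perm (Fin n)) : Finset (Fin n × Fin n) :=
  Finset.image (fun p : Fin n × Fin n => (p.1, z p.2))
    (Finset.univ.filter (fun p : Fin n × Fin n => z p.2 < z p.1 ∧ z p.2 ≤ p.1 ∧ p.1 < p.2))

/-- The symplectic Rothe diagram `D^Sp(z) = {(i, z(j)) : z(i) > z(j) < i < j}` (0-indexed). -/
def DSp (n : ℕ) (z : Equiv.Perm (Fin n)) : Finset (Fin n × Fin n) :=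
  Finset.image (fun p : Fin n × Fin n => (p.1, z p.2))
    (Finset.univ.filter (fun p : Fin n × Fin n => z p.2 < z p.1 ∧ z p.2 < p.1 ∧ p.1 < p.2))

/-- The essential set `Ess(D) = {(i,j) ∈ D : (i,j+1) ∉ D and (i+1,j) ∉ D}`. -/
def Ess {n : ℕ} (D : Finset (Fin n × Fin n)) : Finset (Fin n × Fin n) :=
  D.filter (fun p =>
    (∀ q ∈ D, ¬(q.1 = p.1 ∧ (q.2 : ℕ) = (p.2 : ℕ) + 1)) ∧
    (∀ q ∈ D, ¬((q.1 : ℕ) = (p.1 : ℕ) + 1 ∧ q.2 = p.2)))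

/-- A permutation is vexillary if it avoids the pattern 2143. -/
def Vexillary {n : ℕ} (z : Equiv.Perm (Fin n)) : Prop :=
  ¬ ∃ i j k l : Fin n, i < j ∧ j < k ∧ k < l ∧ z j < z i ∧ z i < z l ∧ z l < z k

/-- The ideal of `ℤ[x_1,…,x_N]` generated by symmetric polynomials with zero constant term. -/
def ILambda (N : ℕ) : Ideal (MvPolynomial (Fin N) ℤ) :=
  Ideal.span {f : MvPolynomial (Fin N) ℤ |
    (∀ σ : Equiv.Perm (Fin N), rename (⇑σ) f = f) ∧ coeff 0 f = 0}

/-- Substitute `x_j = 0` for all `j > n`, producing a polynomial in `x_1,…,x_n`. -/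
def truncVars (n N : ℕ) (f : MvPolynomial (Fin N) Rb) : MvPolynomial (Fin n) Rb :=
  aeval (fun i : Fin N => if h : (i : ℕ) < n then X ⟨(i : ℕ), h⟩ else 0) f

/-- The order used to list the elements of a pipe-dream subset `S`:
rows weakly increasing, columns strictly decreasing within a row. -/
def rowOrder {n : ℕ} (p q : Fin n × Fin n) : Prop :=
  p.1 < q.1 ∨ (p.1 = q.1 ∧ q.2 < p.2)

/-- `δ(S)` is a symplectic Hecke word for `z` (with Hecke words computed from `Θ`);
here `L` is the listing of `S` in the order `rowOrder`, and `(a,b) ∈ S` (0-indexed)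
contributes the 0-indexed letter `a + b`, i.e. the 1-indexed letter `(b+1)+(a+1)-1`. -/
def DeltaHeckeWord (n : ℕ) (hn : n % 2 = 0) (z : Equiv.Perm (Fin n))
    (S : Finset (Fin n × Fin n)) : Prop :=
  ∃ L : List (Fin n × Fin n), L.toFinset = S ∧ L.Chain' rowOrder ∧
    heckeApply (L.map (fun p => (p.1 : ℕ) + (p.2 : ℕ))) (theta n hn) = some z


namespace SpAux

variable {n : ℕ}

abbrev Pol (n : ℕ) := MvPolynomial (Fin n) Rb

/-- The variable swap. -/
def sw (a b : Fin n) : Pol n →ₐ[Rb] Pol n := rename ⇑(Equiv.swap a b)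

lemma sw_X (a b c : Fin n) : sw a b (X c) = X (Equiv.swap a b c) := by
  simp [sw]

lemma sw_C (a b : Fin n) (r : Rb) : sw a b (C r) = C r := by
  simp [sw]

lemma sw_sw (a b : Fin n) (f : Pol n) : sw a b (sw a b f) = f := by
  simp only [sw, rename_rename]
  have : (⇑(Equiv.swap a b) ∘ ⇑(Equiv.swap a b)) = id := by
    funext x; simp
  rw [this]; simp

lemma sw_comm (a b c d : Fin n) (h1 : a ≠ c) (h2 : a ≠ d) (h3 : b ≠ c) (h4 : b ≠ d) (f : Pol n) :
    sw a b (sw c d f) = sw c d (sw a b f) := by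
  simp only [sw, rename_rename]
  congr 2
  funext x
  simp only [Function.comp, Equiv.swap_apply_def]
  split_ifs <;> simp_all

lemma sw_braid (a b c : Fin n) (h1 : a ≠ b) (h2 : b ≠ c) (h3 : a ≠ c) (f : Pol n) :
    sw a b (sw b c (sw a b f)) = sw b c (sw a b (sw b c f)) := by
  simp only [sw, rename_rename]
  congr 2
  funext x
  simp only [Function.comp, Equiv.swap_apply_def]
  split_ifs <;> simp_all

lemma dvd_sub_sw (a b : Fin n) (f : Pol n) : (X a - X b : Pol n) ∣ f - sw a b f := by
  induction f using MvPolynomial.induction_on with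
  | C r => simp [sw_C]
  | add p q hp hq =>
    have : p + q - sw a b (p + q) = (p - sw a b p) + (q - sw a b q) := by
      rw [map_add]; ring
    rw [this]; exact dvd_add hp hq
  | mul_X p i hp =>
    have : p * X i - sw a b (p * X i)
        = (p - sw a b p) * X i + sw a b p * (X i - sw a b (X i)) := by
      rw [map_mul]; ring
    rw [this]
    refine dvd_add (Dvd.dvd.mul_right hp _) (Dvd.dvd.mul_left ?_ _)
    rw [sw_X, Equiv.swap_apply_def]
    split_ifs with h1 h2
    · subst h1; exact dvd_rfl
    · subst h2; exact ⟨-1, by ring⟩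
    · simp

lemma exists_dd (a b : Fin n) (f : Pol n) : ∃ g, IsDivDiffB a b f g := by
  obtain ⟨g, hg⟩ := dvd_sub_sw a b ((1 + C bb * X b) * f)
  exact ⟨g, hg.symm⟩

/-- The operator. -/
def dd (a b : Fin n) (f : Pol n) : Pol n := (exists_dd a b f).choose

lemma dd_isDD (a b : Fin n) (f : Pol n) : IsDivDiffB a b f (dd a b f) := (exists_dd a b f).choose_spec

lemma Xsub_ne {a b : Fin n} (h : a ≠ b) : (X a - X b : Pol n) ≠ 0 := by
  intro h'
  exact h (X_injective (sub_eq_zero.1 h'))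

lemma dd_spec (a b : Fin n) (f : Pol n) :
    (X a - X b) * dd a b f = (1 + C bb * X b) * f - (1 + C bb * X a) * sw a b f := by
  have := dd_isDD a b f
  unfold IsDivDiffB at this
  rw [this]
  have h2 : rename ⇑(Equiv.swap a b) ((1 + C bb * X b) * f) = sw a b ((1 + C bb * X b) * f) := rfl
  rw [h2]
  simp [sw_C, sw_X]

lemma dd_unique {a b : Fin n} (h : a ≠ b) {f g : Pol n} (hg : IsDivDiffB a b f g) : g = dd a b f := by
  apply mul_left_cancel₀ (Xsub_ne h)
  exact hg.trans (dd_isDD a b f).symm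

lemma dd_unique' {a b : Fin n} (h : a ≠ b) {f g : Pol n}
    (hg : (X a - X b) * g = (1 + C bb * X b) * f - (1 + C bb * X a) * sw a b f) : dd a b f = g := by
  apply mul_left_cancel₀ (Xsub_ne h)
  rw [hg, dd_spec]

lemma dd_sym_mul {a b : Fin n} (h : a ≠ b) (s f : Pol n) (hs : sw a b s = s) :
    dd a b (s * f) = s * dd a b f := by
  apply dd_unique' h
  rw [map_mul, hs]
  linear_combination s * dd_spec a b f

lemma dd_neg_beta {a b : Fin n} (h : a ≠ b) (f : Pol n) :
    dd a b (-C bb * f) = -C bb * dd a b f := by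
  apply dd_sym_mul h
  simp [sw_C]

lemma dd_of_sym {a b : Fin n} (h : a ≠ b) (f : Pol n) (hf : sw a b f = f) :
    dd a b f = -C bb * f := by
  apply dd_unique' h
  rw [hf]; ring

lemma dd_oplus {a b c : Fin n} (h : a ≠ b) (hc : c ≠ a) (hc' : c ≠ b) (Q : Pol n)
    (hQ : sw a b Q = Q) : dd a b (oplus a c * Q) = Q := by
  apply dd_unique' h
  rw [map_mul, hQ]
  simp only [oplus, map_add, map_mul, sw_C, sw_X, Equiv.swap_apply_left,
    Equiv.swap_apply_of_ne_of_ne hc hc']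
  ring

lemma sw_dd {a b : Fin n} (h : a ≠ b) (f : Pol n) : sw a b (dd a b f) = dd a b f := by
  apply mul_left_cancel₀ (Xsub_ne h)
  have h1 := dd_spec a b f
  have h2 := congrArg (sw a b) h1
  simp only [map_mul, map_sub, map_add, map_one, sw_C, sw_X, Equiv.swap_apply_left,
    Equiv.swap_apply_right, sw_sw] at h2
  linear_combination -h2 - h1

lemma dd_comm {a b c d : Fin n} (hab : a ≠ b) (hcd : c ≠ d)
    (h1 : a ≠ c) (h2 : a ≠ d) (h3 : b ≠ c) (h4 : b ≠ d) (f : Pol n) :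
    dd a b (dd c d f) = dd c d (dd a b f) := by
  apply mul_left_cancel₀ (mul_ne_zero (Xsub_ne hab) (Xsub_ne hcd))
  have e1 := dd_spec a b f
  have e2 := dd_spec c d f
  have e3 := dd_spec a b (dd c d f)
  have e4 := dd_spec c d (dd a b f)
  have e5 := congrArg (sw c d) e1
  have e6 := congrArg (sw a b) e2
  simp only [map_mul, map_sub, map_add, map_one, sw_C, sw_X,
    Equiv.swap_apply_of_ne_of_ne h1 h2, Equiv.swap_apply_of_ne_of_ne h3 h4] at e5
  simp only [map_mul, map_sub, map_add, map_one, sw_C, sw_X,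
    Equiv.swap_apply_of_ne_of_ne h1.symm h3.symm, Equiv.swap_apply_of_ne_of_ne h2.symm h4.symm] at e6
  rw [sw_comm a b c d h1 h2 h3 h4] at e6
  linear_combination (X c - X d) * e3 - (X a - X b) * e4 + (1 + C bb * X b) * e2
    - (1 + C bb * X a) * e6 - (1 + C bb * X d) * e1 + (1 + C bb * X c) * e5

lemma dd_triple {a b c : Fin n} (h1 : a ≠ b) (h2 : b ≠ c) (h3 : a ≠ c) (f : Pol n) :
    (X a - X b) * (X b - X c) * (X a - X c) * dd a b (dd b c (dd a b f)) =
      (1 + C bb * X c) ^ 2 * ((1 + C bb * X b) * f - (1 + C bb * X a) * sw a b f)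
      - (1 + C bb * X b) ^ 2 *
        ((1 + C bb * X c) * sw b c f - (1 + C bb * X a) * sw b c (sw a b f))
      + (1 + C bb * X a) ^ 2 * ((1 + C bb * X c) * sw a b (sw b c f)
        - (1 + C bb * X b) * sw a b (sw b c (sw a b f))) := by
  have e1 := dd_spec a b f
  have e2 := dd_spec b c (dd a b f)
  have e3 := dd_spec a b (dd b c (dd a b f))
  have e4 := congrArg (sw b c) e1
  have e5 := congrArg (sw a b) e2
  have e6 := congrArg (sw a b) e4
  simp only [map_mul, map_sub, map_add, map_one, sw_C, sw_X, Equiv.swap_apply_left,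
    Equiv.swap_apply_right, sw_dd h1, Equiv.swap_apply_of_ne_of_ne h1 h3,
    Equiv.swap_apply_of_ne_of_ne h3.symm h2.symm] at e4 e5 e6
  apply mul_left_cancel₀ (Xsub_ne h1)
  linear_combination (X a - X b) * (X b - X c) * (X a - X c) * e3
    + (X a - X b) * (X a - X c) * (1 + C bb * X b) * e2
    - (X a - X b) * (X b - X c) * (1 + C bb * X a) * e5
    + (X a - X b) * (1 + C bb * X c) ^ 2 * e1
    - (X a - X b) * (1 + C bb * X b) ^ 2 * e4
    + (X a - X b) * (1 + C bb * X a) ^ 2 * e6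

lemma dd_triple' {a b c : Fin n} (h1 : a ≠ b) (h2 : b ≠ c) (h3 : a ≠ c) (f : Pol n) :
    (X a - X b) * (X b - X c) * (X a - X c) * dd b c (dd a b (dd b c f)) =
      (1 + C bb * X c) ^ 2 * ((1 + C bb * X b) * f - (1 + C bb * X a) * sw a b f)
      - (1 + C bb * X b) ^ 2 *
        ((1 + C bb * X c) * sw b c f - (1 + C bb * X a) * sw b c (sw a b f))
      + (1 + C bb * X a) ^ 2 * ((1 + C bb * X c) * sw a b (sw b c f)
        - (1 + C bb * X b) * sw a b (sw b c (sw a b f))) := by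
  rw [sw_braid a b c h1 h2 h3]
  have e1 := dd_spec b c f
  have e2 := dd_spec a b (dd b c f)
  have e3 := dd_spec b c (dd a b (dd b c f))
  have e4 := congrArg (sw a b) e1
  have e5 := congrArg (sw b c) e2
  have e6 := congrArg (sw b c) e4
  simp only [map_mul, map_sub, map_add, map_one, sw_C, sw_X, Equiv.swap_apply_left,
    Equiv.swap_apply_right, sw_dd h2, Equiv.swap_apply_of_ne_of_ne h1 h3,
    Equiv.swap_apply_of_ne_of_ne h3.symm h2.symm] at e4 e5 e6
  apply mul_left_cancel₀ (Xsub_ne h2)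
  linear_combination (X a - X b) * (X b - X c) * (X a - X c) * e3
    + (X b - X c) * (X a - X c) * (1 + C bb * X c) * e2
    - (X a - X b) * (X b - X c) * (1 + C bb * X b) * e5
    + (X b - X c) * (1 + C bb * X b) * (1 + C bb * X c) * e1
    - (X b - X c) * (1 + C bb * X a) * (1 + C bb * X c) * e4
    + (X b - X c) * (1 + C bb * X a) * (1 + C bb * X b) * e6

lemma dd_braid {a b c : Fin n} (h1 : a ≠ b) (h2 : b ≠ c) (h3 : a ≠ c) (f : Pol n) :
    dd a b (dd b c (dd a b f)) = dd b c (dd a b (dd b c f)) := by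
  apply mul_left_cancel₀ (mul_ne_zero (mul_ne_zero (Xsub_ne h1) (Xsub_ne h2)) (Xsub_ne h3))
  rw [dd_triple h1 h2 h3, dd_triple' h1 h2 h3]

/-! ### The top polynomial -/

lemma oplus_comm (a b : Fin n) : oplus a b = oplus b a := by
  unfold oplus; ring

lemma sw_oplus (i j a b : Fin n) :
    sw i j (oplus a b) = oplus (Equiv.swap i j a) (Equiv.swap i j b) := by
  simp [oplus, sw_X]

/-- sorted image of a pair under a transposition -/
def phi (i j : Fin n) (p : Fin n × Fin n) : Fin n × Fin n :=
  if Equiv.swap i j p.1 < Equiv.swap i j p.2 then (Equiv.swap i j p.1, Equiv.swap i j p.2)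
  else (Equiv.swap i j p.2, Equiv.swap i j p.1)

lemma phi_phi (i j : Fin n) (p : Fin n × Fin n) (hp : p.1 < p.2) : phi i j (phi i j p) = p := by
  unfold phi
  split_ifs with h1 h2 h3
  · simp
  · simp at h2; exact absurd hp (not_lt.2 h2)
  · simp at h3; exact absurd hp (not_lt.2 h3.le)
  · simp

lemma sw_prod (i j : Fin n) (S : Finset (Fin n × Fin n)) (h1 : ∀ p ∈ S, p.1 < p.2)
    (h2 : ∀ p ∈ S, phi i j p ∈ S) :
    sw i j (∏ p ∈ S, oplus p.1 p.2) = ∏ p ∈ S, oplus p.1 p.2 := by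
  rw [map_prod]
  refine Finset.prod_nbij' (phi i j) (phi i j) h2 h2 (fun p hp => phi_phi i j p (h1 p hp))
    (fun p hp => phi_phi i j p (h1 p hp)) ?_
  intro p hp
  rw [sw_oplus]
  unfold phi
  split_ifs
  · rfl
  · rw [oplus_comm]

lemma spTop_mid {i i' : Fin n} (hi : (i' : ℕ) = i + 1) (h : Fin.rev i = i') :
    dd i i' (spTop n) = -C bb * spTop n := by
  have hne : i ≠ i' := by intro h; subst h; omega
  apply dd_of_sym hne
  apply sw_prod
  · simp; tauto
  · rintro ⟨a, b⟩ hp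
    simp only [Finset.mem_filter, Finset.mem_univ, true_and] at hp ⊢
    have h' := congrArg Fin.val h
    rw [Fin.val_rev] at h'
    have ha := a.2
    have hb := b.2
    have hi2 := i.2
    have hi3 := i'.2
    unfold phi
    simp only [Equiv.swap_apply_def]
    simp only [Fin.ext_iff, Fin.lt_def] at *
    split_ifs <;> simp <;> omega

lemma spTop_pair {i i' j j' : Fin n} (hi : (i' : ℕ) = i + 1) (hj : (j' : ℕ) = j + 1)
    (hij : i' < j) (h : Fin.rev i = j') :
    dd i i' (spTop n) = dd j j' (spTop n) := by
  have hne : i ≠ i' := by intro h; subst h; omega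
  have hne' : j ≠ j' := by intro h; subst h; omega
  have h' := congrArg Fin.val h
  rw [Fin.val_rev] at h'
  have hi2 := i.2
  have hi3 := i'.2
  have hj2 := j.2
  have hj3 := j'.2
  have hlt : (i' : ℕ) < j := hij
  set D := Finset.univ.filter
      (fun p : Fin n × Fin n => p.1 < p.2 ∧ (p.1 : ℕ) + (p.2 : ℕ) + 2 ≤ n) with hD
  have hmem : (i, j) ∈ D := by
    simp only [hD, Finset.mem_filter, Finset.mem_univ, true_and, Fin.lt_def]; omega
  have e : spTop n = oplus i j * ∏ p ∈ D.erase (i, j), oplus p.1 p.2 := by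
    rw [Finset.mul_prod_erase D (fun p => oplus p.1 p.2) hmem]; rfl
  have h1 : ∀ p ∈ D.erase (i, j), p.1 < p.2 := by
    intro p hp
    simp [hD] at hp; exact hp.2.1
  have a1 : dd i i' (spTop n) = ∏ p ∈ D.erase (i, j), oplus p.1 p.2 := by
    rw [e]
    apply dd_oplus hne
    · intro h; subst h; omega
    · intro h; subst h; omega
    apply sw_prod _ _ _ h1
    rintro ⟨a, b⟩ hp
    have ha := a.2
    have hb := b.2
    unfold phi
    simp only [hD, Finset.mem_erase, Finset.mem_filter, Finset.mem_univ, true_and, ne_eq,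
      Prod.ext_iff, Equiv.swap_apply_def, Fin.ext_iff, Fin.lt_def] at hp ⊢
    split_ifs <;> simp <;> omega
  have a2 : dd j j' (spTop n) = ∏ p ∈ D.erase (i, j), oplus p.1 p.2 := by
    rw [e, oplus_comm]
    apply dd_oplus hne'
    · intro h; subst h; omega
    · intro h; subst h; omega
    apply sw_prod _ _ _ h1
    rintro ⟨a, b⟩ hp
    have ha := a.2
    have hb := b.2
    unfold phi
    simp only [hD, Finset.mem_erase, Finset.mem_filter, Finset.mem_univ, true_and, ne_eq,
      Prod.ext_iff, Equiv.swap_apply_def, Fin.ext_iff, Fin.lt_def] at hp ⊢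
    split_ifs <;> simp <;> omega
  rw [a1, a2]

/-! ### Conjugation -/

/-- conjugation -/
def cj (i j : Fin n) (z : Equiv.Perm (Fin n)) : Equiv.Perm (Fin n) :=
  Equiv.swap i j * z * Equiv.swap i j

lemma cj_apply (i j : Fin n) (z : Equiv.Perm (Fin n)) (k : Fin n) :
    cj i j z k = Equiv.swap i j (z (Equiv.swap i j k)) := rfl

lemma cj_cj (i j : Fin n) (z : Equiv.Perm (Fin n)) : cj i j (cj i j z) = z := by
  ext k; simp [cj_apply]

lemma fpf_invol {z : Equiv.Perm (Fin n)} (h : IsFPF z) (k : Fin n) : z (z k) = k := by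
  have := Equiv.Perm.ext_iff.1 h.1 k
  simpa using this

lemma fpf_cj {z : Equiv.Perm (Fin n)} (h : IsFPF z) (i j : Fin n) : IsFPF (cj i j z) := by
  constructor
  · ext k; simp [cj_apply, fpf_invol h]
  · intro k hk
    rw [cj_apply, Equiv.swap_apply_eq_iff] at hk
    exact h.2 _ hk

lemma cj_comm (a b c d : Fin n) (h1 : a ≠ c) (h2 : a ≠ d) (h3 : b ≠ c) (h4 : b ≠ d)
    (z : Equiv.Perm (Fin n)) : cj a b (cj c d z) = cj c d (cj a b z) := by
  have h : Equiv.swap a b * Equiv.swap c d = Equiv.swap c d * Equiv.swap a b := by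
    ext x
    simp only [Equiv.Perm.mul_apply, Equiv.swap_apply_def]
    split_ifs <;> simp_all
  have h' : cj a b (cj c d z)
      = (Equiv.swap a b * Equiv.swap c d) * z * (Equiv.swap c d * Equiv.swap a b) := by
    simp only [cj, mul_assoc]
  rw [h', h, ← h]
  simp only [cj, mul_assoc]
  rw [← mul_assoc, h, mul_assoc]

lemma cj_braid (a b c : Fin n) (h1 : a ≠ b) (h2 : b ≠ c) (h3 : a ≠ c)
    (z : Equiv.Perm (Fin n)) :
    cj a b (cj b c (cj a b z)) = cj b c (cj a b (cj b c z)) := by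
  have h : Equiv.swap a b * Equiv.swap b c * Equiv.swap a b
      = Equiv.swap b c * Equiv.swap a b * Equiv.swap b c := by
    ext x
    simp only [Equiv.Perm.mul_apply, Equiv.swap_apply_def]
    split_ifs <;> simp_all
  have e1 : cj a b (cj b c (cj a b z)) = (Equiv.swap a b * Equiv.swap b c * Equiv.swap a b) * z
      * (Equiv.swap a b * Equiv.swap b c * Equiv.swap a b) := by
    simp only [cj, mul_assoc]
  have e2 : cj b c (cj a b (cj b c z)) = (Equiv.swap b c * Equiv.swap a b * Equiv.swap b c) * z
      * (Equiv.swap b c * Equiv.swap a b * Equiv.swap b c) := by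
    simp only [cj, mul_assoc]
  rw [e1, e2, h]

/-! ### Measure -/

/-- measure -/
def mu (z : Equiv.Perm (Fin n)) : ℕ := ∑ k : Fin n, (k : ℕ) * (z k : ℕ)

lemma mu_inv (z : Equiv.Perm (Fin n)) : mu z⁻¹ = mu z := by
  unfold mu
  rw [← Equiv.sum_comp z]
  apply Finset.sum_congr rfl
  intro k _
  simp [mul_comm]

lemma mu_mul_lt (w : Equiv.Perm (Fin n)) {i j : Fin n} (hij : i < j) (h : w i < w j) :
    mu (w * Equiv.swap i j) < mu w := by
  have hne : i ≠ j := hij.ne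
  have key : ∀ u : Equiv.Perm (Fin n), mu u = ((i : ℕ) * u i + j * u j)
      + ∑ k ∈ (Finset.univ.erase i).erase j, (k : ℕ) * (u k : ℕ) := by
    intro u
    unfold mu
    rw [← Finset.add_sum_erase _ _ (Finset.mem_univ i),
      ← Finset.add_sum_erase _ _ (Finset.mem_erase.2 ⟨hne.symm, Finset.mem_univ j⟩), add_assoc]
  rw [key, key w]
  have e : ∑ k ∈ (Finset.univ.erase i).erase j, (k : ℕ) * ((w * Equiv.swap i j) k : ℕ)
      = ∑ k ∈ (Finset.univ.erase i).erase j, (k : ℕ) * (w k : ℕ) := by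
    apply Finset.sum_congr rfl
    intro k hk
    simp only [Finset.mem_erase] at hk
    simp [Equiv.swap_apply_of_ne_of_ne hk.2.1 hk.1]
  rw [e]
  simp only [Equiv.Perm.mul_apply, Equiv.swap_apply_left, Equiv.swap_apply_right]
  have hij' : (i : ℕ) < j := hij
  have h' : (w i : ℕ) < w j := h
  nlinarith

lemma mu_cj_lt {z : Equiv.Perm (Fin n)} (hz : IsFPF z) {i i' : Fin n} (hi : (i' : ℕ) = i + 1)
    (h : z i < z i') : mu (cj i i' z) < mu z := by
  have hlt : i < i' := by rw [Fin.lt_def]; omega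
  have h1 := mu_mul_lt z hlt h
  refine lt_trans ?_ h1
  have e : (cj i i' z)⁻¹ = (z * Equiv.swap i i')⁻¹ * Equiv.swap i i' := by
    simp [cj, mul_assoc]
  rw [← mu_inv, e, ← mu_inv (z * Equiv.swap i i')]
  apply mu_mul_lt _ hlt
  have hzi : z⁻¹ = z := by
    rw [inv_eq_iff_mul_eq_one]; exact hz.1
  simp only [mul_inv_rev, hzi, Equiv.swap_inv, Equiv.Perm.mul_apply]
  have b1 := hz.2 i
  have b2 := hz.2 i'
  have b3 : z i = i' → z i' = i := fun h => by rw [← h]; exact fpf_invol hz i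
  simp only [Equiv.swap_apply_def]
  simp only [Fin.ext_iff, Fin.lt_def] at *
  split_ifs <;> omega

lemma exists_asc (z : Equiv.Perm (Fin n)) :
    z = revPerm n ∨ ∃ i i' : Fin n, (i' : ℕ) = i + 1 ∧ z i < z i' := by
  by_cases h : ∃ i i' : Fin n, (i' : ℕ) = i + 1 ∧ z i < z i'
  · exact Or.inr h
  left
  push Not at h
  have anti : ∀ (d : ℕ) (a b : Fin n), (b : ℕ) = a + d → (z b : ℕ) + d ≤ z a := by
    intro d
    induction d with
    | zero => intro a b hab; have : a = b := Fin.ext (by omega); subst this; omega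
    | succ d ih =>
      intro a b hab
      have hb := b.2
      have h1 := ih a ⟨a + d, by omega⟩ rfl
      have h2 := h ⟨a + d, by omega⟩ b (by simp; omega)
      have h3 : z ⟨a + d, by omega⟩ ≠ z b := by
        intro h
        have := congrArg Fin.val (z.injective h)
        simp at this; omega
      rw [Fin.le_def] at h2
      rw [ne_eq, Fin.ext_iff] at h3
      omega
  ext k
  have hk := k.2
  have e1 := anti k ⟨0, by omega⟩ k (by simp)
  have e2 := anti (n - 1 - k) k ⟨n - 1, by omega⟩ (by simp; omega)
  have e3 := (z ⟨0, by omega⟩).2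
  have : ((revPerm n k : Fin n) : ℕ) = n - (k + 1) := Fin.val_rev k
  omega

lemma rev_no_asc {i i' : Fin n} (hi : (i' : ℕ) = i + 1) : ¬ revPerm n i < revPerm n i' := by
  have e1 : ((revPerm n i : Fin n) : ℕ) = n - (i + 1) := Fin.val_rev i
  have e2 : ((revPerm n i' : Fin n) : ℕ) = n - (i' + 1) := Fin.val_rev i'
  rw [Fin.lt_def]; omega

/-! ### The family -/

open Classical in
/-- the family -/
def GG (z : Equiv.Perm (Fin n)) : Pol n :=
  if h : ∃ p : Fin n × Fin n, ((p.2 : ℕ) = p.1 + 1 ∧ z p.1 < z p.2) ∧ mu (cj p.1 p.2 z) < mu z then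
    dd h.choose.1 h.choose.2 (GG (cj h.choose.1 h.choose.2 z))
  else spTop n
termination_by mu z
decreasing_by exact h.choose_spec.2

lemma GG_cases {z : Equiv.Perm (Fin n)} (hz : IsFPF z) :
    (z = revPerm n) ∨
    ∃ i i' : Fin n, (i' : ℕ) = i + 1 ∧ z i < z i' ∧ GG z = dd i i' (GG (cj i i' z)) := by
  rcases exists_asc z with h | ⟨i, i', hi, hlt⟩
  · exact Or.inl h
  right
  have h : ∃ p : Fin n × Fin n, ((p.2 : ℕ) = p.1 + 1 ∧ z p.1 < z p.2) ∧
      mu (cj p.1 p.2 z) < mu z := ⟨(i, i'), ⟨hi, hlt⟩, mu_cj_lt hz hi hlt⟩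
  refine ⟨h.choose.1, h.choose.2, h.choose_spec.1.1, h.choose_spec.1.2, ?_⟩
  conv_lhs => rw [GG]
  rw [dif_pos h]

lemma GG_rev : GG (revPerm n) = spTop n := by
  rw [GG, dif_neg]
  rintro ⟨p, hp, -⟩
  exact rev_no_asc hp.1 hp.2

/-- properties -/
def PA (z : Equiv.Perm (Fin n)) : Prop :=
  ∀ i i' : Fin n, (i' : ℕ) = i + 1 → z i < z i' → GG z = dd i i' (GG (cj i i' z))

def PB (z : Equiv.Perm (Fin n)) : Prop :=
  ∀ i i' : Fin n, (i' : ℕ) = i + 1 → z i = i' → dd i i' (GG z) = -C bb * GG z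

def PC (z : Equiv.Perm (Fin n)) : Prop :=
  ∀ i i' j j' : Fin n, (i' : ℕ) = i + 1 → (j' : ℕ) = j + 1 → i' < j → z i = j' → z i' = j →
    dd i i' (GG z) = dd j j' (GG z)

lemma adj_ne {i i' : Fin n} (hi : (i' : ℕ) = i + 1) : i ≠ i' := by
  intro h; subst h; omega

lemma ne_of_val {i j : Fin n} (h : (i : ℕ) ≠ j) : i ≠ j := fun e => h (congrArg Fin.val e)

/-- two steps up -/
lemma two_step {z : Equiv.Perm (Fin n)} (hz : IsFPF z)
    (ih : ∀ y : Equiv.Perm (Fin n), mu y < mu z → IsFPF y → PA y ∧ PB y ∧ PC y)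
    (hA : PA z) {k k' l l' : Fin n} (hk : (k' : ℕ) = k + 1) (hl : (l' : ℕ) = l + 1)
    (h1 : z k < z k') (h2 : cj k k' z l < cj k k' z l') :
    GG z = dd k k' (dd l l' (GG (cj l l' (cj k k' z)))) ∧
      IsFPF (cj l l' (cj k k' z)) ∧ PB (cj l l' (cj k k' z)) ∧ PC (cj l l' (cj k k' z)) := by
  have m1 := mu_cj_lt hz hk h1
  have f1 := fpf_cj hz k k'
  have m2 := mu_cj_lt f1 hl h2
  have f2 := fpf_cj f1 l l'
  obtain ⟨_, b, c⟩ := ih _ (m2.trans m1) f2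
  refine ⟨?_, f2, b, c⟩
  rw [hA k k' hk h1, (ih _ m1 f1).1 l l' hl h2]

lemma cj_left {z : Equiv.Perm (Fin n)} {k k' : Fin n} (h1 : z k' ≠ k) (h2 : z k' ≠ k') :
    cj k k' z k = z k' := by
  rw [cj_apply, Equiv.swap_apply_left, Equiv.swap_apply_of_ne_of_ne h1 h2]

lemma cj_right {z : Equiv.Perm (Fin n)} {k k' : Fin n} (h1 : z k ≠ k) (h2 : z k ≠ k') :
    cj k k' z k' = z k := by
  rw [cj_apply, Equiv.swap_apply_right, Equiv.swap_apply_of_ne_of_ne h1 h2]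

lemma cj_other {z : Equiv.Perm (Fin n)} {k k' l : Fin n} (h1 : l ≠ k) (h2 : l ≠ k')
    (h3 : z l ≠ k) (h4 : z l ≠ k') : cj k k' z l = z l := by
  rw [cj_apply, Equiv.swap_apply_of_ne_of_ne h1 h2, Equiv.swap_apply_of_ne_of_ne h3 h4]

lemma pa_adj {z : Equiv.Perm (Fin n)} (hz : IsFPF z)
    (ih : ∀ y : Equiv.Perm (Fin n), mu y < mu z → IsFPF y → PA y ∧ PB y ∧ PC y)
    {a b c : Fin n} (hb : (b : ℕ) = a + 1) (hc : (c : ℕ) = b + 1)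
    (h1 : z a < z b) (h2 : z b < z c) :
    dd a b (GG (cj a b z)) = dd b c (GG (cj b c z)) := by
  have hab : a ≠ b := adj_ne hb
  have hbc : b ≠ c := adj_ne hc
  have hac : a ≠ c := ne_of_val (by omega)
  have za := hz.2 a
  have zb := hz.2 b
  have zc := hz.2 c
  have ia := fpf_invol hz a
  have ib := fpf_invol hz b
  have ic := fpf_invol hz c
  have o1 : z a ≠ b := by grind
  have o2 : z a ≠ c := by grind
  have o3 : z b ≠ a := by grind
  have o4 : z b ≠ c := by grind
  have o5 : z c ≠ a := by grind
  have o6 : z c ≠ b := by grind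
  -- left side
  have y1 : cj a b z a = z b := cj_left o3 zb
  have y2 : cj a b z b = z a := cj_right za o1
  have y3 : cj a b z c = z c := cj_other hac.symm hbc.symm o5 o6
  have m1 := mu_cj_lt hz hb h1
  have f1 := fpf_cj hz a b
  have s1 : cj a b z b < cj a b z c := by rw [y2, y3]; exact h1.trans h2
  have m2 := mu_cj_lt f1 hc s1
  have f2 := fpf_cj f1 b c
  have s2 : cj b c (cj a b z) a < cj b c (cj a b z) b := by
    rw [cj_left (by rwa [y3]) (by rwa [y3]), cj_other hab hac (by rwa [y1]) (by rwa [y1]), y1, y3]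
    exact h2
  -- right side
  have w1 : cj b c z a = z a := cj_other hab hac o1 o2
  have w2 : cj b c z b = z c := cj_left o6 zc
  have w3 : cj b c z c = z b := cj_right zb o4
  have n1 := mu_cj_lt hz hc h2
  have g1 := fpf_cj hz b c
  have t1 : cj b c z a < cj b c z b := by rw [w1, w2]; exact h1.trans h2
  have n2 := mu_cj_lt g1 hb t1
  have g2 := fpf_cj g1 a b
  have t2 : cj a b (cj b c z) b < cj a b (cj b c z) c := by
    rw [cj_right (by rwa [w1]) (by rwa [w1]),
      cj_other hac.symm hbc.symm (by rwa [w3]) (by rwa [w3]), w1, w3]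
    exact h1
  rw [(ih _ m1 f1).1 b c hc s1, (ih _ (m2.trans m1) f2).1 a b hb s2,
    (ih _ n1 g1).1 a b hb t1, (ih _ (n2.trans n1) g2).1 b c hc t2,
    cj_braid a b c hab hbc hac, dd_braid hab hbc hac]

lemma pa_far {z : Equiv.Perm (Fin n)} (hz : IsFPF z)
    (ih : ∀ y : Equiv.Perm (Fin n), mu y < mu z → IsFPF y → PA y ∧ PB y ∧ PC y)
    {i i' j j' : Fin n} (hi : (i' : ℕ) = i + 1) (hj : (j' : ℕ) = j + 1) (hij : i' < j)
    (h1 : z i < z i') (h2 : z j < z j') :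
    dd i i' (GG (cj i i' z)) = dd j j' (GG (cj j j' z)) := by
  have hij' : (i' : ℕ) < j := hij
  have hii : i ≠ i' := adj_ne hi
  have hjj : j ≠ j' := adj_ne hj
  have e1 : i ≠ j := ne_of_val (by omega)
  have e2 : i ≠ j' := ne_of_val (by omega)
  have e3 : i' ≠ j := ne_of_val (by omega)
  have e4 : i' ≠ j' := ne_of_val (by omega)
  have zi := hz.2 i
  have zi' := hz.2 i'
  have zj := hz.2 j
  have zj' := hz.2 j'
  have ii := fpf_invol hz i
  have ii' := fpf_invol hz i'
  have ij := fpf_invol hz j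
  have ij' := fpf_invol hz j'
  have m1 := mu_cj_lt hz hi h1
  have f1 := fpf_cj hz i i'
  have n1 := mu_cj_lt hz hj h2
  have g1 := fpf_cj hz j j'
  by_cases hsp : z i = j ∧ z i' = j'
  · obtain ⟨q1, q2⟩ := hsp
    have q3 : z j = i := by rw [← q1, ii]
    have q4 : z j' = i' := by rw [← q2, ii']
    have : cj j j' z = cj i i' z := by
      ext k
      have inj := fun l => (z.injective.eq_iff (a := k) (b := l))
      congr 1
      simp only [cj_apply, Equiv.swap_apply_def]
      have k1 := inj i
      have k2 := inj i'
      have k3 := inj j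
      have k4 := inj j'
      rw [q1] at k1
      rw [q2] at k2
      rw [q3] at k3
      rw [q4] at k4
      split_ifs <;> simp_all
    rw [this]
    refine (ih _ m1 f1).2.2 i i' j j' hi hj hij ?_ ?_
    · rw [cj_left (by rw [q2]; exact e2.symm) (by rw [q2]; exact e4.symm), q2]
    · rw [cj_right (by rw [q1]; exact e1.symm) (by rw [q1]; exact e3.symm), q1]
  · have s1 : cj i i' z j < cj i i' z j' := by
      rw [cj_apply, cj_apply, Equiv.swap_apply_of_ne_of_ne e1.symm e3.symm,
        Equiv.swap_apply_of_ne_of_ne e2.symm e4.symm]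
      have : ¬ (z j = i ∧ z j' = i') := by
        rintro ⟨r1, r2⟩
        exact hsp ⟨by rw [← r1, ij], by rw [← r2, ij']⟩
      simp only [Equiv.swap_apply_def]
      simp only [Fin.ext_iff, Fin.lt_def] at *
      split_ifs <;> omega
    have t1 : cj j j' z i < cj j j' z i' := by
      rw [cj_apply, cj_apply, Equiv.swap_apply_of_ne_of_ne e1 e2,
        Equiv.swap_apply_of_ne_of_ne e3 e4]
      simp only [Equiv.swap_apply_def]
      simp only [Fin.ext_iff, Fin.lt_def] at *
      split_ifs <;> omega
    rw [(ih _ m1 f1).1 j j' hj s1, (ih _ n1 g1).1 i i' hi t1,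
      cj_comm j j' i i' e1.symm e3.symm e2.symm e4.symm,
      dd_comm hii hjj e1 e2 e3 e4]

lemma pa_main {z : Equiv.Perm (Fin n)} (hz : IsFPF z)
    (ih : ∀ y : Equiv.Perm (Fin n), mu y < mu z → IsFPF y → PA y ∧ PB y ∧ PC y) : PA z := by
  intro i i' hi h
  rcases GG_cases hz with hr | ⟨j, j', hj, hlt, e⟩
  · subst hr; exact absurd h (rev_no_asc hi)
  rw [e]
  rcases lt_trichotomy (i : ℕ) j with hij | hij | hij
  · rcases Nat.lt_or_ge (i' : ℕ) j with h' | h'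
    · exact (pa_far hz ih hi hj h' h hlt).symm
    · have : i' = j := Fin.ext (by omega)
      subst this
      exact (pa_adj hz ih hi hj h hlt).symm
  · have e1 : i = j := Fin.ext hij
    have e2 : i' = j' := Fin.ext (by omega)
    rw [e1, e2]
  · rcases Nat.lt_or_ge (j' : ℕ) i with h' | h'
    · exact pa_far hz ih hj hi h' hlt h
    · have : j' = i := Fin.ext (by omega)
      subst this
      exact pa_adj hz ih hj hi hlt h

lemma pb_main {z : Equiv.Perm (Fin n)} (hz : IsFPF z)
    (ih : ∀ y : Equiv.Perm (Fin n), mu y < mu z → IsFPF y → PA y ∧ PB y ∧ PC y) (hA : PA z) :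
    PB z := by
  intro i i' hi hzi
  have hzi' : z i' = i := by rw [← hzi]; exact fpf_invol hz i
  have hii := adj_ne hi
  rcases exists_asc z with hr | ⟨k, k', hk, hlt⟩
  · subst hr
    rw [GG_rev]
    exact spTop_mid hi hzi
  have hkk := adj_ne hk
  have zk := hz.2 k
  have zk' := hz.2 k'
  have ik := fpf_invol hz k
  have ik' := fpf_invol hz k'
  have hki : k ≠ i := by
    rintro rfl
    have : k' = i' := Fin.ext (by omega)
    subst this
    rw [hzi, hzi', Fin.lt_def] at hlt; omega
  by_cases c1 : k' = i
  · -- k = i - 1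
    subst c1
    have hki' : k ≠ i' := ne_of_val (by omega)
    have q1 : z k ≠ k' := by rintro h; rw [h, hzi] at ik; exact hki' ik.symm
    have q2 : z k ≠ i' := by rintro h; rw [h, hzi'] at ik; exact hki ik.symm
    have y1 : cj k k' z k' = z k := cj_right zk q1
    have y2 : cj k k' z i' = k := by
      rw [cj_apply, Equiv.swap_apply_of_ne_of_ne hki'.symm hii.symm, hzi', Equiv.swap_apply_right]
    have y3 : cj k k' z k = i' := by
      rw [cj_left (by rw [hzi]; exact hki'.symm) (by rw [hzi]; exact hii.symm), hzi]
    have s : cj k k' z k' < cj k k' z i' := by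
      rw [y1, y2]
      rw [hzi] at hlt
      simp only [ne_eq, Fin.ext_iff, Fin.lt_def] at *
      omega
    obtain ⟨eq, f, b, -⟩ := two_step hz ih hA hk hi hlt s
    have hb := b k k' hk (by
      rw [cj_apply, Equiv.swap_apply_of_ne_of_ne hkk hki', y3, Equiv.swap_apply_right])
    rw [eq, ← dd_braid hkk hii hki', hb, dd_neg_beta hii, dd_neg_beta hkk]
  by_cases c2 : k = i'
  · subst c2
    have hik' : i ≠ k' := ne_of_val (by omega)
    have q1 : z k' ≠ k := by rintro h; rw [h, hzi'] at ik'; exact hik' ik'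
    have q2 : z k' ≠ i := by rintro h; rw [h, hzi] at ik'; exact hkk ik'
    have y1 : cj k k' z k = z k' := cj_left q1 zk'
    have y2 : cj k k' z i = k' := by
      rw [cj_apply, Equiv.swap_apply_of_ne_of_ne hii hik', hzi, Equiv.swap_apply_left]
    have y3 : cj k k' z k' = i := by
      rw [cj_right (by rw [hzi']; exact hii) (by rw [hzi']; exact hik'), hzi']
    have s : cj k k' z i < cj k k' z k := by
      rw [y1, y2]
      rw [hzi'] at hlt
      simp only [ne_eq, Fin.ext_iff, Fin.lt_def] at *
      omega
    obtain ⟨eq, f, b, -⟩ := two_step hz ih hA hk hi hlt s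
    have hb := b k k' hk (by
      rw [cj_apply, Equiv.swap_apply_right, y2,
        Equiv.swap_apply_of_ne_of_ne hik'.symm hkk.symm])
    rw [eq, dd_braid hii hkk hik', hb, dd_neg_beta hii, dd_neg_beta hkk]
  · have e1 : k ≠ i := hki
    have e2 : k ≠ i' := c2
    have e3 : k' ≠ i := c1
    have e4 : k' ≠ i' := by
      intro h; apply hki; apply Fin.ext; rw [Fin.ext_iff] at h; omega
    have m := mu_cj_lt hz hk hlt
    have f := fpf_cj hz k k'
    have hb := (ih _ m f).2.1 i i' hi (by
      rw [cj_other e1.symm e3.symm (by rw [hzi]; exact e2.symm) (by rw [hzi]; exact e4.symm), hzi])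
    rw [hA k k' hk hlt, dd_comm hii hkk e1.symm e3.symm e2.symm e4.symm, hb, dd_neg_beta hkk]

lemma pc_main {z : Equiv.Perm (Fin n)} (hz : IsFPF z)
    (ih : ∀ y : Equiv.Perm (Fin n), mu y < mu z → IsFPF y → PA y ∧ PB y ∧ PC y) (hA : PA z) :
    PC z := by
  intro i i' j j' hi hj hij hzi hzi'
  have hij' : (i' : ℕ) < j := hij
  have hzj' : z j' = i := by rw [← hzi]; exact fpf_invol hz i
  have hzj : z j = i' := by rw [← hzi']; exact fpf_invol hz i'
  have hii : i ≠ i' := adj_ne hi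
  have hjj : j ≠ j' := adj_ne hj
  have e1 : i ≠ j := ne_of_val (by omega)
  have e2 : i ≠ j' := ne_of_val (by omega)
  have e3 : i' ≠ j := ne_of_val (by omega)
  have e4 : i' ≠ j' := ne_of_val (by omega)
  rcases exists_asc z with hr | ⟨k, k', hk, hlt⟩
  · subst hr
    rw [GG_rev]
    exact spTop_pair hi hj hij hzi
  have hkk := adj_ne hk
  have zk := hz.2 k
  have zk' := hz.2 k'
  have ik := fpf_invol hz k
  have ik' := fpf_invol hz k'
  have hki : k ≠ i := by
    rintro rfl
    have : k' = i' := Fin.ext (by omega)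
    subst this
    rw [hzi, hzi', Fin.lt_def] at hlt; omega
  have hkj : k ≠ j := by
    rintro rfl
    have : k' = j' := Fin.ext (by omega)
    subst this
    rw [hzj, hzj', Fin.lt_def] at hlt; omega
  by_cases c1 : k' = i
  · subst c1
    have d1 : k ≠ i' := ne_of_val (by omega)
    have d2 : k ≠ j := hkj
    have d3 : k ≠ j' := ne_of_val (by omega)
    have q1 : z k ≠ k' := by rintro h; rw [h, hzi] at ik; exact d3 ik.symm
    have q3 : z k ≠ j := by rintro h; rw [h, hzj] at ik; exact d1 ik.symm
    have y1 : cj k k' z k' = z k := cj_right zk q1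
    have y2 : cj k k' z i' = j := by
      rw [cj_other d1.symm hii.symm (by rw [hzi']; exact d2.symm) (by rw [hzi']; exact e1.symm),
        hzi']
    have y3 : cj k k' z k = j' := by
      rw [cj_left (by rw [hzi]; exact d3.symm) (by rw [hzi]; exact e2.symm), hzi]
    have s : cj k k' z k' < cj k k' z i' := by
      rw [y1, y2]
      rw [hzi] at hlt
      simp only [ne_eq, Fin.ext_iff, Fin.lt_def] at *
      omega
    obtain ⟨eq, f, -, c⟩ := two_step hz ih hA hk hi hlt s
    have hc := c k k' j j' hk hj (by rw [Fin.lt_def]; omega)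
      (by rw [cj_other hkk d1 (by rw [y3]; exact e2.symm) (by rw [y3]; exact e4.symm), y3])
      (by rw [cj_left (by rw [y2]; exact e1.symm) (by rw [y2]; exact e3.symm), y2])
    rw [eq, ← dd_braid hkk hii d1, hc, dd_comm hii hjj e1 e2 e3 e4,
      dd_comm hkk hjj d2 d3 e1 e2]
  by_cases c2 : k = j'
  · subst c2
    have d1 : k' ≠ i := c1
    have d2 : k' ≠ i' := ne_of_val (by omega)
    have d3 : k' ≠ j := ne_of_val (by omega)
    have q1 : z k' ≠ k := by rintro h; rw [h, hzj'] at ik'; exact d1 ik'.symm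
    have q3 : z k' ≠ i' := by rintro h; rw [h, hzi'] at ik'; exact d3 ik'.symm
    have y1 : cj k k' z k = z k' := cj_left q1 zk'
    have y2 : cj k k' z j = i' := by
      rw [cj_other hjj d3.symm (by rw [hzj]; exact e4) (by rw [hzj]; exact d2.symm), hzj]
    have y3 : cj k k' z i = k' := by
      rw [cj_apply, Equiv.swap_apply_of_ne_of_ne e2 d1.symm, hzi, Equiv.swap_apply_left]
    have y4 : cj k k' z i' = j := by
      rw [cj_other e4 d2.symm (by rw [hzi']; exact hjj) (by rw [hzi']; exact d3.symm), hzi']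
    have s : cj k k' z j < cj k k' z k := by
      rw [y1, y2]
      rw [hzj'] at hlt
      simp only [ne_eq, Fin.ext_iff, Fin.lt_def] at *
      omega
    obtain ⟨eq, f, -, c⟩ := two_step hz ih hA hk hj hlt s
    have hc := c i i' k k' hi hk (by rw [Fin.lt_def]; omega)
      (by rw [cj_other e1 e2 (by rw [y3]; exact d3) (by rw [y3]; exact hkk.symm), y3])
      (by rw [cj_apply, Equiv.swap_apply_of_ne_of_ne e3 e4, y4, Equiv.swap_apply_left])
    rw [eq, dd_braid hjj hkk d3.symm, ← hc, dd_comm hii hkk e2 d1.symm e4 d2.symm,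
      dd_comm hii hjj e1 e2 e3 e4]
  by_cases c3 : k = i'
  · subst c3
    have d0 : k' ≠ j := by
      rintro rfl
      rw [hzi', hzj, Fin.lt_def] at hlt; omega
    have d1 : k' ≠ i := c1
    have d3 : k' ≠ j' := ne_of_val (by omega)
    have hv0 : (k' : ℕ) ≠ j := fun h => d0 (Fin.ext h)
    have q1 : z k' ≠ k := by rintro h; rw [h, hzi'] at ik'; exact d0 ik'.symm
    have q3 : z k' ≠ j' := by rintro h; rw [h, hzj'] at ik'; exact d1 ik'.symm
    have y1 : cj k k' z k = z k' := cj_left q1 zk'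
    have y2 : cj k k' z i = j' := by
      rw [cj_other hii d1.symm (by rw [hzi]; exact e4.symm) (by rw [hzi]; exact d3.symm), hzi]
    have y3 : cj k k' z k' = j := by
      rw [cj_right (by rw [hzi']; exact e3.symm) (by rw [hzi']; exact d0.symm), hzi']
    have s : cj k k' z i < cj k k' z k := by
      rw [y1, y2]
      rw [hzi'] at hlt
      simp only [ne_eq, Fin.ext_iff, Fin.lt_def] at *
      omega
    obtain ⟨eq, f, -, c⟩ := two_step hz ih hA hk hi hlt s
    have hc := c k k' j j' hk hj (by rw [Fin.lt_def]; omega)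
      (by rw [cj_right (by rw [y2]; exact e2.symm) (by rw [y2]; exact e4.symm), y2])
      (by rw [cj_other d1 hkk.symm (by rw [y3]; exact e1.symm) (by rw [y3]; exact e3.symm), y3])
    rw [eq, dd_braid hii hkk d1.symm, hc, dd_comm hii hjj e1 e2 e3 e4,
      dd_comm hkk hjj e3 e4 d0 d3]
  by_cases c4 : k' = j
  · subst c4
    have d1 : k ≠ j' := c2
    have hv3 : (k : ℕ) ≠ i' := fun h => c3 (Fin.ext h)
    have q1 : z k ≠ k' := by rintro h; rw [h, hzj] at ik; exact c3 ik.symm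
    have q3 : z k ≠ i := by rintro h; rw [h, hzi] at ik; exact d1 ik.symm
    have y1 : cj k k' z k' = z k := cj_right zk q1
    have y2 : cj k k' z j' = i := by
      rw [cj_other d1.symm hjj.symm (by rw [hzj']; exact hki.symm) (by rw [hzj']; exact e1), hzj']
    have y3 : cj k k' z i = j' := by
      rw [cj_other hki.symm e1 (by rw [hzi]; exact d1.symm) (by rw [hzi]; exact hjj.symm), hzi]
    have y4 : cj k k' z i' = k := by
      rw [cj_apply, Equiv.swap_apply_of_ne_of_ne (Ne.symm c3) e3, hzi', Equiv.swap_apply_right]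
    have s : cj k k' z k' < cj k k' z j' := by
      rw [y1, y2]
      rw [hzj] at hlt
      simp only [ne_eq, Fin.ext_iff, Fin.lt_def] at *
      omega
    obtain ⟨eq, f, -, c⟩ := two_step hz ih hA hk hj hlt s
    have hc := c i i' k k' hi hk (by rw [Fin.lt_def]; omega)
      (by rw [cj_apply, Equiv.swap_apply_of_ne_of_ne e1 e2, y3, Equiv.swap_apply_right])
      (by rw [cj_other e3 e4 (by rw [y4]; exact hkk) (by rw [y4]; exact d1), y4])
    rw [eq, ← dd_braid hkk hjj d1, ← hc, dd_comm hii hkk hki.symm e1 (Ne.symm c3) e3,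
      dd_comm hii hjj e1 e2 e3 e4]
  · have g1 : k' ≠ i' := by
      intro h; apply hki; apply Fin.ext; rw [Fin.ext_iff] at h; omega
    have g2 : k' ≠ j' := by
      intro h; apply hkj; apply Fin.ext; rw [Fin.ext_iff] at h; omega
    have m := mu_cj_lt hz hk hlt
    have f := fpf_cj hz k k'
    have hc := (ih _ m f).2.2 i i' j j' hi hj hij
      (by rw [cj_other hki.symm (Ne.symm c1) (by rw [hzi]; exact Ne.symm c2)
            (by rw [hzi]; exact g2.symm), hzi])
      (by rw [cj_other (Ne.symm c3) g1.symm (by rw [hzi']; exact hkj.symm)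
            (by rw [hzi']; exact Ne.symm c4), hzi'])
    rw [hA k k' hk hlt, dd_comm hii hkk hki.symm (Ne.symm c1) (Ne.symm c3) g1.symm, hc,
      dd_comm hjj hkk hkj.symm (Ne.symm c4) (Ne.symm c2) g2.symm]

lemma all_main (z : Equiv.Perm (Fin n)) (hz : IsFPF z) : PA z ∧ PB z ∧ PC z := by
  induction hm : mu z using Nat.strong_induction_on generalizing z with
  | _ m ih =>
    subst hm
    have ih' : ∀ y : Equiv.Perm (Fin n), mu y < mu z → IsFPF y → PA y ∧ PB y ∧ PC y :=
      fun y hy fy => ih _ hy y fy rfl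
    have hA := pa_main hz ih'
    exact ⟨hA, pb_main hz ih' hA, pc_main hz ih' hA⟩

lemma spFam_step {z : Equiv.Perm (Fin n)} (hz : IsFPF z) {i i' : Fin n} (hi : (i' : ℕ) = i + 1)
    (h : z i < z i') (G : Equiv.Perm (Fin n) → Pol n) (hG : IsSpFam n G) :
    G z = dd i i' (G (cj i i' z)) := by
  have hii := adj_ne hi
  have zi := hz.2 i
  have zi' := hz.2 i'
  have ii := fpf_invol hz i
  have ii' := fpf_invol hz i'
  have hlt : i < i' := by rw [Fin.lt_def]; omega
  have q1 : z i ≠ i' := by rintro h'; rw [h'] at ii h; rw [ii] at h; exact absurd h (not_lt.2 hlt.le)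
  have q2 : z i' ≠ i := by rintro h'; rw [h'] at ii'; exact q1 ii'
  have y1 : cj i i' z i = z i' := cj_left q2 zi'
  have y2 : cj i i' z i' = z i := cj_right zi q1
  have := hG.2 (cj i i' z) (fpf_cj hz i i') i i' hi (by rwa [y1]) (by rwa [y2])
    (by rw [y1, y2]; exact h)
  have e : Equiv.swap i i' * cj i i' z * Equiv.swap i i' = z := cj_cj i i' z
  rw [e] at this
  exact dd_unique hii this

lemma GG_fam : IsSpFam n GG := by
  refine ⟨GG_rev, ?_⟩
  intro z hz i i' hi h1 h2 h3
  have y1 : cj i i' z i = z i' := cj_left h2 (hz.2 i')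
  have y2 : cj i i' z i' = z i := cj_right (hz.2 i) h1
  have := (all_main _ (fpf_cj hz i i')).1 i i' hi (by rw [y1, y2]; exact h3)
  rw [cj_cj] at this
  change IsDivDiffB i i' (GG z) (GG (cj i i' z))
  rw [this]
  exact dd_isDD i i' (GG z)

lemma fam_unique (G : Equiv.Perm (Fin n) → Pol n) (hG : IsSpFam n G)
    (z : Equiv.Perm (Fin n)) (hz : IsFPF z) : G z = GG z := by
  induction hm : mu z using Nat.strong_induction_on generalizing z with
  | _ m ih =>
    subst hm
    rcases exists_asc z with hr | ⟨i, i', hi, h⟩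
    · subst hr; rw [hG.1, GG_rev]
    · rw [spFam_step hz hi h G hG, spFam_step hz hi h GG GG_fam,
        ih _ (mu_cj_lt hz hi h) _ (fpf_cj hz i i') rfl]

end SpAux

theorem statement0 (n : ℕ) (hpos : 0 < n) (hev : n % 2 = 0) :
    ∃ G : Equiv.Perm (Fin n) → MvPolynomial (Fin n) Rb,
      IsSpFam n G ∧
        ∀ G' : Equiv.Perm (Fin n) → MvPolynomial (Fin n) Rb,
          IsSpFam n G' → ∀ z : Equiv.Perm (Fin n), IsFPF z → G' z = G z := by
  exact ⟨SpAux.GG, SpAux.GG_fam, fun G' hG' z hz => SpAux.fam_unique G' hG' z hz⟩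

end
end

section
/- Let n be a positive even integer and z ∈ I^FPF_n. Then every w ∈ B_fpf(z) satisfies ℓ(w) ≥ ℓ_fpf(z), and 𝔊^Sp_z = Σ_{w ∈ B_fpf(z)} β^{ℓ(w) − ℓ_fpf(z)} 𝔊_w in ℤ[β][x_1,…,x_n]. -/
open MvPolynomial

noncomputable section

/-! ### Part 1: the algebra of 0-Hecke operators and the Yang-Baxter equation -/

section Alg
variable {R E : Type*} [CommRing R] [Ring E] [Algebra R E]

structure HRel (u : ℕ → E) : Prop where
  id : ∀ a, u a * u a = u a
  comm : ∀ a b, a + 1 < b → u a * u b = u b * u a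
  braid : ∀ a, u a * (u (a+1) * u a) = u (a+1) * (u a * u (a+1))

def hh (β : R) (u : ℕ → E) (a : ℕ) (x : R) : E := 1 + (β * x) • u a

def opl (β x y : R) : R := x + y + β * (x * y)

/-- product of factors attached to a list; the first entry acts first (rightmost). -/
def wordOp (β : R) (u : ℕ → E) : List (ℕ × R) → E
  | [] => 1
  | p :: L => wordOp β u L * hh β u p.1 p.2

theorem wordOp_append (β : R) (u : ℕ → E) (L L' : List (ℕ × R)) :
    wordOp β u (L ++ L') = wordOp β u L' * wordOp β u L := by
  induction L with
  | nil => simp [wordOp]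
  | cons p L ih => simp [wordOp, ih, mul_assoc]

theorem hh_comm {β : R} {u : ℕ → E} (hu : HRel u) {a b : ℕ} (h : a + 1 < b) (x y : R) :
    Commute (hh β u a x) (hh β u b y) := by
  have : Commute (u a) (u b) := hu.comm a b h
  unfold hh
  exact (Commute.one_left _).add_left
    (((Commute.one_right _).add_right ((this.smul_right _))).smul_left _)

theorem hh_mul {β : R} {u : ℕ → E} (hu : HRel u) (a : ℕ) (x y : R) :
    hh β u a x * hh β u a y = hh β u a (opl β x y) := by
  simp only [hh, opl, mul_add, add_mul, one_mul, mul_one, smul_mul_assoc, mul_smul_comm,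
    smul_smul, hu.id, smul_add]
  module

theorem hh_yb {β : R} {u : ℕ → E} (hu : HRel u) (a : ℕ) (x y : R) :
    hh β u a x * hh β u (a+1) (opl β x y) * hh β u a y =
      hh β u (a+1) y * hh β u a (opl β x y) * hh β u (a+1) x := by
  simp only [hh, opl, mul_add, add_mul, one_mul, mul_one, smul_mul_assoc, mul_smul_comm,
    smul_smul, hu.id, smul_add, mul_assoc, hu.braid]
  module

theorem hh_K {β : R} {u : ℕ → E} (hu : HRel u) (a : ℕ) (x y : R) :
    hh β u a x * hh β u (a+1) x * hh β u a y =
      (1 + (β * opl β x y) • u a + (β * x * (β * y)) • (u (a+1) * u a)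
        - (β * x * (β * y)) • (u a * u (a+1))) * hh β u (a+1) x := by
  simp only [hh, opl, mul_add, add_mul, sub_mul, one_mul, mul_one, smul_mul_assoc, mul_smul_comm,
    smul_smul, hu.id, smul_add, mul_assoc, hu.braid]
  module

/-- letters `c+m-1, …, c`. -/
def Al (c : ℕ) : ℕ → R → List (ℕ × R)
  | 0, _ => []
  | m+1, x => Al (c+1) m x ++ [(c, x)]

/-- letters `c, …, c+m-1`. -/
def Bl (c : ℕ) : ℕ → R → List (ℕ × R)
  | 0, _ => []
  | m+1, x => (c, x) :: Bl (c+1) m x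

/-- rows `c, …, c+m-1` with variables `v, …` -/
def Ql (X : ℕ → R) (c v : ℕ) : ℕ → List (ℕ × R)
  | 0 => []
  | m+1 => Al c (m+1) (X v) ++ Ql X (c+1) (v+1) m

def Cl (β : R) (X : ℕ → R) (y : R) (c v : ℕ) : ℕ → List (ℕ × R)
  | 0 => []
  | m+1 => (c, opl β (X v) y) :: Cl β X y (c+1) (v+1) m

variable (β : R) (u : ℕ → E)

theorem Al_succ (c m : ℕ) (x : R) :
    wordOp β u (Al c (m+1) x) = hh β u c x * wordOp β u (Al (c+1) m x) := by
  simp [Al, wordOp_append, wordOp]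

theorem Bl_succ (c m : ℕ) (x : R) :
    wordOp β u (Bl c (m+1) x) = wordOp β u (Bl (c+1) m x) * hh β u c x := by
  simp [Bl, wordOp]

theorem Cl_succ (X : ℕ → R) (y : R) (c v m : ℕ) :
    wordOp β u (Cl β X y c v (m+1)) =
      wordOp β u (Cl β X y (c+1) (v+1) m) * hh β u c (opl β (X v) y) := by
  simp [Cl, wordOp]

theorem Ql_succ (X : ℕ → R) (c v m : ℕ) :
    wordOp β u (Ql X c v (m+1)) =
      wordOp β u (Ql X (c+1) (v+1) m) * wordOp β u (Al c (m+1) (X v)) := by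
  simp [Ql, wordOp_append]

variable {β u}

theorem wordOp_comm (hu : HRel u) {a : ℕ} (x : R) (L : List (ℕ × R))
    (hL : ∀ p ∈ L, a + 1 < p.1) : Commute (hh β u a x) (wordOp β u L) := by
  induction L with
  | nil => exact Commute.one_right _
  | cons p L ih =>
    exact (ih (fun q hq => hL q (by simp [hq]))).mul_right (hh_comm hu (hL p (by simp)) _ _)

theorem wordOp_comm' (hu : HRel u) {a : ℕ} (x : R) (L : List (ℕ × R))
    (hL : ∀ p ∈ L, p.1 + 1 < a) : Commute (hh β u a x) (wordOp β u L) := by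
  induction L with
  | nil => exact Commute.one_right _
  | cons p L ih =>
    exact (ih (fun q hq => hL q (by simp [hq]))).mul_right (hh_comm hu (hL p (by simp)) _ _).symm

theorem Al_mem {c m : ℕ} {x : R} : ∀ p ∈ Al c m x, c ≤ p.1 ∧ p.1 < c + m := by
  induction m generalizing c with
  | zero => simp [Al]
  | succ m ih =>
    intro p hp
    simp only [Al, List.mem_append, List.mem_singleton] at hp
    rcases hp with hp | rfl
    · have := ih p hp; omega
    · simp

theorem Bl_mem {c m : ℕ} {x : R} : ∀ p ∈ Bl c m x, c ≤ p.1 ∧ p.1 < c + m := by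
  induction m generalizing c with
  | zero => simp [Bl]
  | succ m ih =>
    intro p hp
    simp only [Bl, List.mem_cons] at hp
    rcases hp with rfl | hp
    · simp
    · have := ih p hp; omega

theorem Ql_mem {X : ℕ → R} {c v m : ℕ} : ∀ p ∈ Ql X c v m, c ≤ p.1 := by
  induction m generalizing c v with
  | zero => simp [Ql]
  | succ m ih =>
    intro p hp
    simp only [Ql, List.mem_append] at hp
    rcases hp with hp | hp
    · exact (Al_mem p hp).1
    · have := ih p hp; omega

/-- The `A` products commute. -/
theorem Al_comm (hu : HRel u) (c m : ℕ) (x y : R) :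
    wordOp β u (Al c m x) * wordOp β u (Al c m y) =
      wordOp β u (Al c m y) * wordOp β u (Al c m x) := by
  induction m generalizing c with
  | zero => simp [Al]
  | succ m ih =>
    rcases m with _ | m
    · simp only [Al, wordOp, List.nil_append, one_mul]
      rw [hh_mul hu, hh_mul hu]
      congr 1
      simp only [opl]; ring
    · have key : ∀ x y : R, wordOp β u (Al c (m+1+1) x) * wordOp β u (Al c (m+1+1) y) =
          (1 + (β * opl β x y) • u c + (β * x * (β * y)) • (u (c+1) * u c)
        - (β * x * (β * y)) • (u c * u (c+1))) *
          (wordOp β u (Al (c+1) (m+1) x) * wordOp β u (Al (c+1) (m+1) y)) := by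
        intro x y
        have hc : hh β u c y * wordOp β u (Al (c+1+1) m x) =
            wordOp β u (Al (c+1+1) m x) * hh β u c y :=
          wordOp_comm hu y _ (fun p hp => by have := Al_mem p hp; omega)
        calc _ = hh β u c x * hh β u (c+1) x * (wordOp β u (Al (c+1+1) m x) * hh β u c y)
                * wordOp β u (Al (c+1) (m+1) y) := by
              rw [Al_succ, Al_succ _ _ c, Al_succ _ _ (c+1) m x]; simp only [mul_assoc]
          _ = (hh β u c x * hh β u (c+1) x * hh β u c y) * wordOp β u (Al (c+1+1) m x)
                * wordOp β u (Al (c+1) (m+1) y) := by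
              rw [← hc]; simp only [mul_assoc]
          _ = _ := by
              rw [hh_K hu, Al_succ _ _ (c+1) m x]; simp only [mul_assoc]
      rw [key x y, key y x, ih]
      congr 1
      have h1 : opl β x y = opl β y x := by simp only [opl]; ring
      rw [h1, mul_comm (β * x)]

theorem AB_swap (hu : HRel u) (c m : ℕ) (x y : R) :
    wordOp β u (Al c (m+1) x) * wordOp β u (Bl c (m+1) y) =
      wordOp β u (Bl (c+1) m y) * hh β u c (opl β x y) * wordOp β u (Al (c+1) m x) := by
  induction m generalizing c with
  | zero =>
    simp only [Al, Bl, wordOp, List.nil_append, one_mul, mul_one]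
    exact hh_mul hu _ _ _
  | succ m ih =>
    have hc : hh β u c y * wordOp β u (Al (c+1+1) m x) =
        wordOp β u (Al (c+1+1) m x) * hh β u c y :=
      wordOp_comm hu y _ (fun p hp => by have := Al_mem p hp; omega)
    have hc2 : hh β u c x * wordOp β u (Bl (c+1+1) m y) =
        wordOp β u (Bl (c+1+1) m y) * hh β u c x :=
      wordOp_comm hu x _ (fun p hp => by have := Bl_mem p hp; omega)
    calc _ = hh β u c x * (wordOp β u (Al (c+1) (m+1) x) * wordOp β u (Bl (c+1) (m+1) y))
              * hh β u c y := by
            rw [Al_succ, Bl_succ]; simp only [mul_assoc]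
      _ = (hh β u c x * wordOp β u (Bl (c+1+1) m y)) * hh β u (c+1) (opl β x y) *
            (wordOp β u (Al (c+1+1) m x) * hh β u c y) := by
            rw [ih]; simp only [mul_assoc]
      _ = wordOp β u (Bl (c+1+1) m y) * (hh β u c x * hh β u (c+1) (opl β x y) * hh β u c y)
            * wordOp β u (Al (c+1+1) m x) := by
            rw [hc2, ← hc]; simp only [mul_assoc]
      _ = _ := by
            rw [hh_yb hu, Bl_succ, Al_succ]; simp only [mul_assoc]

/-- like `Ql` but every row one shorter. -/
def Ql' (X : ℕ → R) (c v : ℕ) : ℕ → List (ℕ × R)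
  | 0 => []
  | m+1 => Al c m (X v) ++ Ql' X (c+1) (v+1) m

theorem Ql'_eq (X : ℕ → R) (c v m : ℕ) : Ql' X c v (m+1) = Ql X c v m := by
  induction m generalizing c v with
  | zero => simp [Ql, Ql', Al]
  | succ m ih =>
    rw [Ql', ih, Ql]

theorem QB_swap (hu : HRel u) (X : ℕ → R) (y : R) (c v m : ℕ) :
    wordOp β u (Ql X c v m) * wordOp β u (Bl c m y) =
      wordOp β u (Cl β X y c v m) * wordOp β u (Ql' X (c+1) v m) := by
  induction m generalizing c v with
  | zero => simp [Ql, Bl, Cl, Ql']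
  | succ m ih =>
    have hc : hh β u c (opl β (X v) y) * wordOp β u (Ql' X (c+1+1) (v+1) m) =
        wordOp β u (Ql' X (c+1+1) (v+1) m) * hh β u c (opl β (X v) y) := by
      rcases m with _ | m
      · simp [Ql', wordOp]
      · rw [Ql'_eq]
        exact wordOp_comm hu _ _ (fun p hp => by have := Ql_mem p hp; omega)
    calc _ = wordOp β u (Ql X (c+1) (v+1) m) *
            (wordOp β u (Al c (m+1) (X v)) * wordOp β u (Bl c (m+1) y)) := by
            rw [Ql_succ]; simp only [mul_assoc]
      _ = (wordOp β u (Ql X (c+1) (v+1) m) * wordOp β u (Bl (c+1) m y)) *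
            hh β u c (opl β (X v) y) * wordOp β u (Al (c+1) m (X v)) := by
            rw [AB_swap hu]; simp only [mul_assoc]
      _ = wordOp β u (Cl β X y (c+1) (v+1) m) *
            (wordOp β u (Ql' X (c+1+1) (v+1) m) * hh β u c (opl β (X v) y)) *
            wordOp β u (Al (c+1) m (X v)) := by
            rw [ih]; simp only [mul_assoc]
      _ = _ := by
            rw [← hc, Cl_succ, Ql', wordOp_append]; simp only [mul_assoc]

/-- The symmetry of the Fomin-Kirillov product. -/
theorem Ql_symm (hu : HRel u) (X X' : ℕ → R) (c v m i : ℕ) (hi : i < m)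
    (h1 : X' (v+i) = X (v+i+1)) (h2 : X' (v+i+1) = X (v+i))
    (h3 : ∀ a, a ≠ v+i → a ≠ v+i+1 → X' a = X a) :
    hh β u (c+i) (X (v+i+1)) * wordOp β u (Ql X c v m) =
      hh β u (c+i) (X (v+i)) * wordOp β u (Ql X' c v m) := by
  induction i generalizing c v m with
  | zero =>
    rcases Nat.lt_or_ge 1 m with hm | hm
    swap
    · obtain rfl : m = 1 := by omega
      simp only [add_zero] at *
      simp only [Ql, Al, wordOp, List.nil_append, List.append_nil, one_mul]
      rw [hh_mul hu, hh_mul hu, h1]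
      congr 1
      simp only [opl]; ring
    obtain ⟨m, rfl⟩ : ∃ k, m = k + 1 + 1 := ⟨m - 2, by omega⟩
    simp only [add_zero] at *
    have hQ : Ql X' (c+1+1) (v+1+1) m = Ql X (c+1+1) (v+1+1) m := by
      have : ∀ c' v' k, v + 1 < v' → Ql X' c' v' k = Ql X c' v' k := by
        intro c' v' k
        induction k generalizing c' v' with
        | zero => intro _; rfl
        | succ k ih => intro h; rw [Ql, Ql, h3 v' (by omega) (by omega), ih _ _ (by omega)]
      exact this _ _ _ (by omega)
    have key : ∀ (Y : ℕ → R), hh β u c (Y (v+1)) * wordOp β u (Ql Y c v (m+1+1)) =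
        wordOp β u (Ql Y (c+1+1) (v+1+1) m) * (wordOp β u (Al c (m+1+1) (Y (v+1))) *
          wordOp β u (Al c (m+1+1) (Y v))) := by
      intro Y
      have hc : hh β u c (Y (v+1)) * wordOp β u (Ql Y (c+1+1) (v+1+1) m) =
          wordOp β u (Ql Y (c+1+1) (v+1+1) m) * hh β u c (Y (v+1)) :=
        wordOp_comm hu _ _ (fun p hp => by have := Ql_mem p hp; omega)
      rw [Ql_succ, Ql_succ, Al_succ _ _ c (m+1) (Y (v+1))]
      simp only [← mul_assoc]
      rw [hc]
    have k' := key X'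
    rw [h2, h1, hQ] at k'
    rw [k', key X, Al_comm hu]
  | succ i ih =>
    obtain ⟨m, rfl⟩ : ∃ k, m = k + 1 := ⟨m - 1, by omega⟩
    rw [Ql_succ, Ql_succ, h3 v (by omega) (by omega), ← mul_assoc, ← mul_assoc]
    congr 1
    have := ih (c+1) (v+1) m (by omega) (by convert h1 using 2 <;> omega)
      (by convert h2 using 2 <;> omega)
      (fun a ha hb => h3 a (by omega) (by omega))
    rw [show c + 1 + i = c + (i+1) by omega, show v + 1 + i = v + (i+1) by omega] at this
    exact this

end Alg


/-! ### Part 2: reduction at `Θ`, operators of partial actions -/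

section Theta
variable {R M : Type*} [CommRing R] [AddCommGroup M] [Module R M]

theorem Al_cons (c m : ℕ) (x : R) : Al c (m+1) x = (c+m, x) :: Al c m x := by
  induction m generalizing c with
  | zero => simp [Al]
  | succ m ih =>
    rw [Al, ih, Al, List.cons_append]
    congr 2; omega

theorem Bl_snoc (c m : ℕ) (x : R) : Bl c (m+1) x = Bl c m x ++ [(c+m, x)] := by
  induction m generalizing c with
  | zero => simp [Bl]
  | succ m ih =>
    rw [Bl, ih, Bl, List.cons_append]
    congr 4; omega

variable {β : R} {u : ℕ → Module.End R M} {θ : M}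

theorem hh_theta (h0 : ∀ a, a % 2 = 0 → u a θ = 0) (a : ℕ) (ha : a % 2 = 0) (x : R) :
    hh β u a x θ = θ := by
  simp [hh, h0 a ha]

theorem A_theta (hu : HRel u) (h0 : ∀ a, a % 2 = 0 → u a θ = 0)
    (h1 : ∀ a, a % 2 = 0 → u a (u (a+1) θ) = u (a+2) (u (a+1) θ))
    (c : ℕ) (hc : c % 2 = 0) (y : R) (t : ℕ) :
    wordOp β u (Al c (2*t+1) y) θ = wordOp β u (Bl (c+1) (2*t) y) θ := by
  induction t with
  | zero => simp [Al, Bl, wordOp, hh_theta h0 c hc]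
  | succ t ih =>
    rw [show 2*(t+1)+1 = 2*t+1+1+1 by omega, Al_cons, Al_cons, Al_cons,
      show 2*(t+1) = 2*t+1+1 by omega, Bl_snoc, Bl_snoc]
    rw [Al_cons] at ih
    simp only [wordOp_append, wordOp, one_mul, Module.End.mul_apply] at ih ⊢
    rw [hh_theta h0 _ (by omega)] at ih ⊢
    have e : hh β u (c + 2*t) y (hh β u (c + (2*t+1)) y θ) =
        hh β u (c+1+(2*t+1)) y (hh β u (c + (2*t+1)) y θ) := by
      have := h1 (c+2*t) (by omega)
      simp only [hh, LinearMap.add_apply, LinearMap.smul_apply, Module.End.one_apply, map_add,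
        map_smul]
      rw [show c + (2*t+1) = c+2*t+1 by omega, show c+1+(2*t+1) = c+2*t+2 by omega, this,
        h0 (c+2*t) (by omega), h0 (c+2*t+2) (by omega)]
    rw [e, ← ih, show c + 1 + 2*t = c + (2*t+1) by omega]
    have c1 : hh β u (c + (2*t+1)) y * wordOp β u (Al c (2*t) y) = _ :=
      wordOp_comm' hu _ _ (fun p hp => by have := Al_mem p hp; omega)
    have c2 : hh β u (c + 1 + (2*t+1)) y * wordOp β u (Al c (2*t) y) = _ :=
      wordOp_comm' hu _ _ (fun p hp => by have := Al_mem p hp; omega)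
    simp only [← Module.End.mul_apply]
    rw [c1, ← mul_assoc, ← mul_assoc, c2]

def Sl (β : R) (X : ℕ → R) (c v : ℕ) : ℕ → List (ℕ × R)
  | 0 => []
  | t+1 => Sl β X (c+2) (v+1) t ++ Cl β X (X v) (c+1) (v+1) (2*t+2)

theorem Q_theta (hu : HRel u) (h0 : ∀ a, a % 2 = 0 → u a θ = 0)
    (h1 : ∀ a, a % 2 = 0 → u a (u (a+1) θ) = u (a+2) (u (a+1) θ))
    (X : ℕ → R) (c v : ℕ) (hc : c % 2 = 0) (t : ℕ) :
    wordOp β u (Ql X c v (2*t+1)) θ = wordOp β u (Sl β X c v t) θ := by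
  induction t generalizing c v with
  | zero => simp [Ql, Al, Sl, wordOp, hh_theta h0 c hc]
  | succ t ih =>
    rw [Ql_succ, Module.End.mul_apply, A_theta hu h0 h1 c hc, ← Module.End.mul_apply, QB_swap hu,
      Sl, wordOp_append, Module.End.mul_apply, Module.End.mul_apply, ← ih _ _ (by omega)]
    rw [show 2*(t+1) = (2*t+1)+1 by omega, Ql'_eq]

end Theta

section Op
variable {R : Type*} [CommRing R]

open Classical in
/-- linear operator attached to a partial map. -/
def opF {T T' : Type*} [Fintype T] (F : T → Option T') : (T → R) →ₗ[R] (T' → R) where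
  toFun f w := ∑ y, if F y = some w then f y else 0
  map_add' f g := by
    funext w
    simp only [Pi.add_apply, ← Finset.sum_add_distrib]
    refine Finset.sum_congr rfl fun y _ => ?_
    split_ifs <;> simp
  map_smul' c f := by
    funext w
    simp only [Pi.smul_apply, smul_eq_mul, RingHom.id_apply, Finset.mul_sum]
    refine Finset.sum_congr rfl fun y _ => ?_
    split_ifs <;> simp

theorem opF_apply {T T' : Type*} [Fintype T] [DecidableEq T'] (F : T → Option T') (f : T → R)
    (w : T') : opF F f w = ∑ y, if F y = some w then f y else 0 := by
  refine Finset.sum_congr rfl fun y _ => ?_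
  congr

theorem opF_comp {T T' T'' : Type*} [Fintype T] [Fintype T'] (F : T → Option T')
    (G : T' → Option T'') (f : T → R) :
    opF G (opF F f) = opF (fun y => (F y).bind G) f := by
  classical
  funext w
  simp only [opF_apply]
  have : ∀ y : T', (if G y = some w then ∑ v, (if F v = some y then f v else 0) else 0)
      = ∑ v, if F v = some y ∧ G y = some w then f v else 0 := by
    intro y
    split_ifs with h <;> simp [h]
  rw [Finset.sum_congr rfl (fun y _ => this y), Finset.sum_comm]
  refine Finset.sum_congr rfl fun v _ => ?_
  rcases hv : F v with _ | y
  · simp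
  · simp [ite_and]

theorem opF_single {T T' : Type*} [Fintype T] [DecidableEq T] [DecidableEq T']
    (F : T → Option T') (t : T) (w : T') :
    opF F (Pi.single t (1:R)) w = if F t = some w then 1 else 0 := by
  rw [opF_apply, Finset.sum_eq_single t]
  · simp
  · intro b _ hb; simp [Pi.single_eq_of_ne hb]
  · simp

/-- the relations for a partial action. -/
structure SRel {T : Type*} (s : ℕ → T → Option T) : Prop where
  id : ∀ a t, (s a t).bind (s a) = s a t
  comm : ∀ a b, a + 1 < b → ∀ t, (s a t).bind (s b) = (s b t).bind (s a)
  braid : ∀ a t, ((s a t).bind (s (a+1))).bind (s a) = ((s (a+1) t).bind (s a)).bind (s (a+1))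

theorem SRel.hrel {T : Type*} [Fintype T] {s : ℕ → T → Option T} (h : SRel s) :
    HRel (fun a => (opF (s a) : Module.End R (T → R))) where
  id a := by
    refine LinearMap.ext fun f => ?_
    rw [Module.End.mul_apply, opF_comp]
    congr 1; congr 1; funext t; exact h.id a t
  comm a b hab := by
    refine LinearMap.ext fun f => ?_
    rw [Module.End.mul_apply, Module.End.mul_apply, opF_comp, opF_comp]
    congr 1; congr 1; funext t; exact (h.comm a b hab t).symm
  braid a := by
    refine LinearMap.ext fun f => ?_
    simp only [Module.End.mul_apply]
    rw [opF_comp, opF_comp, opF_comp, opF_comp]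
    congr 1; congr 1; funext t; simpa only [Option.bind_assoc] using h.braid a t

/-- running a word. -/
def run {T : Type*} (s : ℕ → T → Option T) (l : List ℕ) (o : Option T) : Option T :=
  l.foldl (fun o a => o.bind (s a)) o

theorem wordOp_coeff {T : Type*} [Fintype T] [DecidableEq T] (s : ℕ → T → Option T) (β : R)
    (len : T → ℕ) (hlen : ∀ a t t', s a t = some t' → len t' ≤ len t + 1)
    (L : List (ℕ × R)) (t t' : T) (h : len t + L.length ≤ len t') :
    wordOp β (fun a => (opF (s a) : Module.End R (T → R))) L (Pi.single t 1) t' =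
      if run s (L.map Prod.fst) (some t) = some t' then (L.map fun p => β * p.2).prod else 0 := by
  induction L using List.reverseRecOn generalizing t' with
  | nil =>
    simp only [wordOp, Module.End.one_apply, run, List.map_nil, List.foldl_nil, List.prod_nil]
    rw [Pi.single_apply]
    simp [eq_comm]
  | append_singleton L p ih =>
    have hrun : ∀ (L : List ℕ) (t'' : T), run s L (some t) = some t'' →
        len t'' ≤ len t + L.length := by
      intro L
      induction L using List.reverseRecOn with
      | nil => intro t'' h; simp [run] at h; simp [h]
      | append_singleton L a ih =>
        intro t'' h
        simp only [run, List.foldl_append, List.foldl_cons, List.foldl_nil] at h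
        obtain ⟨y, hy, hy'⟩ := Option.bind_eq_some_iff.1 h
        have := ih y hy
        have := hlen _ _ _ hy'
        simp; omega
    simp only [List.length_append, List.length_singleton] at h
    rw [wordOp_append]
    simp only [wordOp, one_mul, Module.End.mul_apply, hh, LinearMap.add_apply,
      LinearMap.smul_apply, Module.End.one_apply, Pi.add_apply, Pi.smul_apply, smul_eq_mul,
      opF_apply]
    rw [ih t' (by omega), if_neg (fun hr => by have := hrun _ _ hr; simp at this; omega), zero_add]
    have : ∀ y : T, (if s p.1 y = some t' then
        wordOp β (fun a => (opF (s a) : Module.End R (T → R))) L (Pi.single t 1) y else 0) =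
        if run s (L.map Prod.fst) (some t) = some y ∧ s p.1 y = some t' then
          (L.map fun p => β * p.2).prod else 0 := by
      intro y
      by_cases hy : s p.1 y = some t'
      · have := hlen _ _ _ hy
        simp [hy, ih y (by omega)]
      · simp [hy]
    rw [Finset.sum_congr rfl (fun y _ => this y)]
    simp only [List.map_append, List.map_cons, List.map_nil, List.prod_append, List.prod_cons,
      List.prod_nil, mul_one]
    have e2 : run s (L.map Prod.fst ++ [p.1]) (some t) =
      (run s (L.map Prod.fst) (some t)).bind (s p.1) := by simp [run]
    rw [e2]
    rcases run s (L.map Prod.fst) (some t) with _ | y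
    · simp
    · simp [ite_and, mul_comm]

end Op

/-! ### Part 3: divided difference recurrence of the coefficients -/

def xv (n : ℕ) (a : ℕ) : MvPolynomial (Fin n) Rb := if h : a < n then X ⟨a, h⟩ else 0

def cb (n : ℕ) : MvPolynomial (Fin n) Rb := C bb

section Rec
variable {n : ℕ} {T : Type*} [Fintype T] [DecidableEq T]

/-- The vector of coefficients. -/
def gvec (s : ℕ → T → Option T) (t₀ : T) : T → MvPolynomial (Fin n) Rb :=
  wordOp (cb n) (fun a => (opF (s a) : Module.End (MvPolynomial (Fin n) Rb) _))
    (Ql (xv n) 0 0 (n-1)) (Pi.single t₀ 1)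

theorem hh_map (s : ℕ → T → Option T) (σ : MvPolynomial (Fin n) Rb →ₐ[Rb] MvPolynomial (Fin n) Rb)
    (a : ℕ) (x : MvPolynomial (Fin n) Rb) (f : T → MvPolynomial (Fin n) Rb) :
    (fun t => σ (hh (cb n) (fun a => (opF (s a) : Module.End (MvPolynomial (Fin n) Rb) _)) a x f t))
    = hh (cb n) (fun a => (opF (s a) : Module.End (MvPolynomial (Fin n) Rb) _)) a (σ x)
        (fun t => σ (f t)) := by
  funext t
  simp only [hh, LinearMap.add_apply, LinearMap.smul_apply, Module.End.one_apply, Pi.add_apply,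
    Pi.smul_apply, smul_eq_mul, opF_apply, map_add, map_mul, map_sum]
  have h : σ (cb n) = cb n := by
    have := σ.commutes bb
    simpa [cb, MvPolynomial.algebraMap_eq] using this
  rw [h]
  congr 2
  refine Finset.sum_congr rfl fun y _ => ?_
  split_ifs <;> simp

theorem wordOp_map (s : ℕ → T → Option T)
    (σ : MvPolynomial (Fin n) Rb →ₐ[Rb] MvPolynomial (Fin n) Rb)
    (L : List (ℕ × MvPolynomial (Fin n) Rb)) (f : T → MvPolynomial (Fin n) Rb) :
    (fun t => σ (wordOp (cb n) (fun a => (opF (s a) : Module.End (MvPolynomial (Fin n) Rb) _)) L f t))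
    = wordOp (cb n) (fun a => (opF (s a) : Module.End (MvPolynomial (Fin n) Rb) _))
        (L.map fun p => (p.1, σ p.2)) (fun t => σ (f t)) := by
  induction L generalizing f with
  | nil => simp [wordOp]
  | cons p L ih =>
    simp only [wordOp, List.map_cons, Module.End.mul_apply]
    rw [ih, hh_map]

theorem Al_map {R R' : Type*} (σ : R → R') (c m : ℕ) (x : R) :
    (Al c m x).map (fun p => (p.1, σ p.2)) = Al c m (σ x) := by
  induction m generalizing c with
  | zero => simp [Al]
  | succ m ih => simp [Al, ih]

theorem Ql_map {R R' : Type*} (σ : R → R') (X : ℕ → R) (c v m : ℕ) :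
    (Ql X c v m).map (fun p => (p.1, σ p.2)) = Ql (fun a => σ (X a)) c v m := by
  induction m generalizing c v with
  | zero => simp [Ql]
  | succ m ih => simp [Ql, ih, Al_map]

theorem gvec_rec (s : ℕ → T → Option T) (hs : SRel s) (t₀ : T) (i j : Fin n)
    (hij : (j : ℕ) = i + 1) (t t' : T) (htt : t ≠ t')
    (h1 : ∀ y, s i y = some t' ↔ (y = t' ∨ y = t)) (h2 : ∀ y, s i y ≠ some t) :
    IsDivDiffB i j (gvec s t₀ t' : MvPolynomial (Fin n) Rb) (C bb * gvec s t₀ t) := by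
  set σ : MvPolynomial (Fin n) Rb →ₐ[Rb] MvPolynomial (Fin n) Rb := rename (Equiv.swap i j) with hσ
  have hjn := j.isLt
  have xi : xv n i = X i := by simp [xv]
  have xj : xv n (i+1) = X j := by
    rw [← hij]; simp [xv]
  have key := Ql_symm (β := cb n) (hs.hrel (R := MvPolynomial (Fin n) Rb)) (xv n)
    (fun a => σ (xv n a)) 0 0 (n-1) i (by omega)
    (by rw [zero_add, xi, xj, hσ, rename_X, Equiv.swap_apply_left])
    (by rw [zero_add, xi, xj, hσ, rename_X, Equiv.swap_apply_right])
    (by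
      intro a ha hb
      simp only [xv]
      split_ifs with h
      · rw [hσ, rename_X, Equiv.swap_apply_of_ne_of_ne]
        · intro h; apply ha; simp [← h]
        · intro h; apply hb; simp [← hij, ← h]
      · simp)
  rw [zero_add, xi, xj] at key
  have key2 := congrArg (fun φ => φ (Pi.single t₀ (1 : MvPolynomial (Fin n) Rb))) key
  simp only [Module.End.mul_apply] at key2
  have e1 : (fun t => σ ((Pi.single t₀ (1 : MvPolynomial (Fin n) Rb) : T → _) t)) =
      Pi.single t₀ 1 := by
    funext t
    by_cases h : t = t₀
    · subst h; simp
    · simp [Pi.single_eq_of_ne h]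
  have e2 := wordOp_map s σ (Ql (xv n) 0 0 (n-1)) (Pi.single t₀ 1)
  rw [Ql_map, e1] at e2
  rw [← e2] at key2
  have h3 := congrFun key2 t
  have h4 := congrFun key2 t'
  have hg : wordOp (cb n) (fun a => (opF (s a) : Module.End (MvPolynomial (Fin n) Rb) _))
    (Ql (xv n) 0 0 (n-1)) (Pi.single t₀ 1) = gvec s t₀ := rfl
  rw [hg] at h3 h4
  have o1 : ∀ f : T → MvPolynomial (Fin n) Rb, opF (s i) f t = 0 := by
    intro f
    rw [opF_apply]
    exact Finset.sum_eq_zero fun y _ => if_neg (h2 y)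
  have o2 : ∀ f : T → MvPolynomial (Fin n) Rb, opF (s i) f t' = f t' + f t := by
    intro f
    rw [opF_apply]
    simp only [h1]
    rw [← Finset.sum_filter]
    have : (Finset.univ.filter fun y => y = t' ∨ y = t) = {t', t} := by
      ext y; simp
    rw [this, Finset.sum_pair htt.symm]
  simp only [hh, LinearMap.add_apply, LinearMap.smul_apply, Module.End.one_apply, Pi.add_apply,
    Pi.smul_apply, smul_eq_mul, o1, o2, mul_zero, add_zero] at h3 h4
  unfold IsDivDiffB
  have hX : σ (X j) = X i := by rw [hσ, rename_X, Equiv.swap_apply_right]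
  have hC : σ (C bb) = C bb := by rw [hσ, rename_C]
  rw [← hσ, map_mul, map_add, map_one, map_mul, hX, hC]
  rw [← h3] at h4
  simp only [cb] at h4
  linear_combination -h4

end Rec

/-! ### Part 4: lengths of permutations -/

section Perm
variable {n : ℕ}

theorem swap_lt_iff {k l : Fin n} (h : (l : ℕ) = k + 1) (x y : Fin n)
    (h1 : ¬ (x = k ∧ y = l)) (h2 : ¬ (x = l ∧ y = k)) :
    Equiv.swap k l x < Equiv.swap k l y ↔ x < y := by
  simp only [Equiv.swap_apply_def]
  have hkl : k ≠ l := by intro e; rw [e] at h; omega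
  simp only [Fin.ext_iff, Fin.lt_def] at *
  split_ifs <;> omega

theorem invLen_mul_swap (w : Equiv.Perm (Fin n)) {i j : Fin n} (h : (j : ℕ) = i + 1)
    (hw : w i < w j) : invLen (w * Equiv.swap i j) = invLen w + 1 := by
  have hij : i < j := by rw [Fin.lt_def]; omega
  unfold invLen
  have hinj : Function.Injective (fun p : Fin n × Fin n =>
      (Equiv.swap i j p.1, Equiv.swap i j p.2)) := by
    intro p q hpq
    simp only [Prod.mk.injEq, EmbeddingLike.apply_eq_iff_eq] at hpq
    exact Prod.ext hpq.1 hpq.2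
  rw [← Finset.card_image_of_injective (Finset.univ.filter
      (fun p : Fin n × Fin n => p.1 < p.2 ∧ w p.2 < w p.1)) hinj,
    ← Finset.card_insert_of_notMem (a := (i, j))]
  · congr 1
    ext ⟨a, b⟩
    simp only [Finset.mem_filter, Finset.mem_univ, true_and, Finset.mem_insert, Finset.mem_image,
      Prod.mk.injEq, Prod.exists]
    rw [Equiv.Perm.mul_apply, Equiv.Perm.mul_apply]
    constructor
    · rintro ⟨hab, hw'⟩
      by_cases hc : a = i ∧ b = j
      · exact Or.inl hc
      · right
        refine ⟨Equiv.swap i j a, Equiv.swap i j b, ⟨?_, hw'⟩, by simp, by simp⟩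
        rw [swap_lt_iff h _ _ hc]
        · exact hab
        · rintro ⟨rfl, rfl⟩; exact absurd hab (not_lt.2 hij.le)
    · rintro (⟨rfl, rfl⟩ | ⟨c, d, ⟨hcd, hw'⟩, rfl, rfl⟩)
      · simp [hij, hw]
      · simp only [Equiv.swap_apply_self, hw', and_true]
        rw [swap_lt_iff h]
        · exact hcd
        · rintro ⟨rfl, rfl⟩; exact absurd hw (not_lt.2 hw'.le)
        · rintro ⟨rfl, rfl⟩; exact absurd hcd (not_lt.2 hij.le)
  · simp only [Finset.mem_image, Finset.mem_filter, Finset.mem_univ, true_and, Prod.mk.injEq,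
      Prod.exists, not_exists, not_and]
    rintro a b ⟨hab, hw'⟩ h1 h2
    have ha : a = j := by
      have := congrArg (Equiv.swap i j) h1; simpa using this
    have hb : b = i := by
      have := congrArg (Equiv.swap i j) h2; simpa using this
    subst ha hb
    exact absurd hab (not_lt.2 hij.le)

theorem invLen_mul_swap' (w : Equiv.Perm (Fin n)) {i j : Fin n} (h : (j : ℕ) = i + 1)
    (hw : w j < w i) : invLen (w * Equiv.swap i j) + 1 = invLen w := by
  have := invLen_mul_swap (w * Equiv.swap i j) h (by simpa using hw)
  rw [← this, mul_assoc, Equiv.swap_mul_self, mul_one]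

theorem invLen_inv (w : Equiv.Perm (Fin n)) : invLen w⁻¹ = invLen w := by
  unfold invLen
  refine Finset.card_bij' (fun p _ => (w⁻¹ p.2, w⁻¹ p.1)) (fun p _ => (w p.2, w p.1)) ?_ ?_ ?_ ?_
  · rintro ⟨a, b⟩; simp; tauto
  · rintro ⟨a, b⟩; simp; tauto
  · rintro ⟨a, b⟩; simp
  · rintro ⟨a, b⟩; simp

theorem invLen_one : invLen (1 : Equiv.Perm (Fin n)) = 0 := by
  unfold invLen
  rw [Finset.card_eq_zero, Finset.filter_eq_empty_iff]
  rintro ⟨a, b⟩ _ ⟨h1, h2⟩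
  exact absurd h1 (not_lt.2 (le_of_lt h2))

theorem perm_eq_one_of_asc (w : Equiv.Perm (Fin n))
    (h : ∀ i j : Fin n, (j : ℕ) = i + 1 → w i < w j) : w = 1 := by
  have hm : StrictMono w := by
    intro a b hab
    have : ∀ (d : ℕ) (a b : Fin n), (b : ℕ) = a + d + 1 → w a < w b := by
      intro d
      induction d with
      | zero => intro a b hab; exact h a b (by omega)
      | succ d ih =>
        intro a b hab
        have hb := b.isLt
        exact (ih a ⟨a + d + 1, by omega⟩ rfl).trans (h _ b (by simp; omega))
    exact this (b - a - 1) a b (by rw [Fin.lt_def] at hab; omega)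
  have : (Equiv.toOrderIso w hm.monotone (by
    intro a b hab
    by_contra hc
    have := hm (not_le.1 hc)
    simp at this
    exact absurd hab (not_le.2 this))) = OrderIso.refl _ := Subsingleton.elim _ _
  ext a
  have h2 := congrArg (fun e : Fin n ≃o Fin n => e a) this
  exact congrArg Fin.val h2

theorem exists_desc (w : Equiv.Perm (Fin n)) (h : w ≠ 1) :
    ∃ i j : Fin n, (j : ℕ) = i + 1 ∧ w j < w i := by
  by_contra hc
  push Not at hc
  refine h (perm_eq_one_of_asc w fun i j hij => lt_of_le_of_ne (hc i j hij) fun e => ?_)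
  have := w.injective e
  rw [this] at hij
  omega

theorem exists_asc (w : Equiv.Perm (Fin n)) (h : w ≠ revPerm n) :
    ∃ i j : Fin n, (j : ℕ) = i + 1 ∧ w i < w j := by
  have : revPerm n * w ≠ 1 := by
    intro e
    apply h
    ext a
    have := congrArg (fun p => revPerm n (p a)) e
    simp [revPerm] at this
    simp [revPerm, this]
  obtain ⟨i, j, hij, hlt⟩ := exists_desc _ this
  refine ⟨i, j, hij, ?_⟩
  simpa [revPerm, Equiv.Perm.mul_apply] using hlt

theorem invLen_le (w : Equiv.Perm (Fin n)) : invLen w ≤ n * n := by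
  unfold invLen
  refine (Finset.card_filter_le _ _).trans ?_
  simp

theorem fpfLen_le (w : Equiv.Perm (Fin n)) : fpfLen w ≤ n * n := by
  unfold fpfLen
  refine (Finset.card_filter_le _ _).trans ?_
  simp

theorem IsFPF.app {z : Equiv.Perm (Fin n)} (hz : IsFPF z) (a : Fin n) : z (z a) = a := by
  have := congrArg (fun p => p a) hz.1
  simpa using this

theorem IsFPF.inv {z : Equiv.Perm (Fin n)} (hz : IsFPF z) : z⁻¹ = z :=
  inv_eq_of_mul_eq_one_left hz.1

theorem invLen_fpf {z : Equiv.Perm (Fin n)} (hz : IsFPF z) :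
    2 * invLen z = 4 * fpfLen z + n := by
  classical
  set A := Finset.univ.filter (fun p : Fin n × Fin n => p.1 < p.2 ∧ z p.2 < z p.1) with hA
  set B := Finset.univ.filter
      (fun p : Fin n × Fin n => z p.2 < z p.1 ∧ z p.2 < p.1 ∧ p.1 < p.2) with hB
  set B' := Finset.univ.filter
      (fun p : Fin n × Fin n => z p.2 < z p.1 ∧ p.1 < z p.2 ∧ p.1 < p.2) with hB'
  set D := Finset.univ.filter (fun a : Fin n => a < z a) with hD
  set D' := Finset.univ.filter (fun a : Fin n => z a < a) with hD'
  have hAeq : A = (B ∪ B') ∪ D.image (fun a => (a, z a)) := by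
    ext ⟨p, q⟩
    simp only [hA, hB, hB', hD, Finset.mem_filter, Finset.mem_union, Finset.mem_image,
      Finset.mem_univ, true_and, Prod.mk.injEq]
    constructor
    · rintro ⟨h1, h2⟩
      rcases lt_trichotomy (z q) p with h | h | h
      · exact Or.inl (Or.inl ⟨h2, h, h1⟩)
      · right
        refine ⟨p, ?_, rfl, ?_⟩
        · rw [← h]; rw [hz.app, h]; exact h1
        · rw [← h, hz.app]
      · exact Or.inl (Or.inr ⟨h2, h, h1⟩)
    · rintro ((h | h) | ⟨a, h, rfl, rfl⟩)
      · exact ⟨h.2.2, h.1⟩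
      · exact ⟨h.2.2, h.1⟩
      · rw [hz.app]; exact ⟨h, h⟩
  have hBB' : B'.card = B.card := by
    refine Finset.card_bij' (fun p _ => (z p.2, z p.1)) (fun p _ => (z p.2, z p.1)) ?_ ?_ ?_ ?_
    · rintro ⟨a, b⟩; simp [hB, hB', hz.app]; tauto
    · rintro ⟨a, b⟩; simp [hB, hB', hz.app]; tauto
    · rintro ⟨a, b⟩; simp [hz.app]
    · rintro ⟨a, b⟩; simp [hz.app]
  have hDD' : D'.card = D.card := by
    refine Finset.card_bij' (fun p _ => z p) (fun p _ => z p) ?_ ?_ ?_ ?_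
    · intro a; simp [hD, hD', hz.app]
    · intro a; simp [hD, hD', hz.app]
    · intro a; simp [hz.app]
    · intro a; simp [hz.app]
  have hn : D.card + D'.card = n := by
    rw [← Finset.card_union_of_disjoint]
    · have : D ∪ D' = Finset.univ := by
        ext a
        simp only [hD, hD', Finset.mem_union, Finset.mem_filter, Finset.mem_univ, true_and, iff_true]
        exact (lt_or_gt_of_ne (hz.2 a)).symm
      rw [this]; simp
    · rw [Finset.disjoint_left]
      intro a; simp only [hD, hD', Finset.mem_filter, Finset.mem_univ, true_and]
      intro h1 h2; exact absurd h1 (not_lt.2 h2.le)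
  have hcard : A.card = B.card + B'.card + D.card := by
    rw [hAeq, Finset.card_union_of_disjoint, Finset.card_union_of_disjoint,
      Finset.card_image_of_injective]
    · intro a b h; exact (Prod.mk.inj h).1
    · rw [Finset.disjoint_left]
      rintro ⟨p, q⟩; simp only [hB, hB', Finset.mem_filter, Finset.mem_univ, true_and]
      rintro ⟨_, h1, _⟩ ⟨_, h2, _⟩; exact absurd h1 (not_lt.2 h2.le)
    · rw [Finset.disjoint_left]
      rintro ⟨p, q⟩
      simp only [hB, hB', Finset.mem_filter, Finset.mem_union, Finset.mem_univ, true_and,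
        Finset.mem_image, Prod.mk.injEq]
      rintro h ⟨a, _, rfl, rfl⟩
      simp [hz.app] at h
  have e1 : invLen z = A.card := rfl
  have e2 : fpfLen z = B.card := rfl
  omega

theorem IsFPF.conj {z : Equiv.Perm (Fin n)} (hz : IsFPF z) (i j : Fin n) :
    IsFPF (Equiv.swap i j * z * Equiv.swap i j) := by
  constructor
  · ext a
    simp [Equiv.Perm.mul_apply, hz.app]
  · intro a h
    have := congrArg (Equiv.swap i j) h
    simp only [Equiv.Perm.mul_apply, Equiv.swap_apply_self] at this
    exact hz.2 _ this

/-- an ascent at `i, j` avoids the pair. -/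
theorem IsFPF.asc {z : Equiv.Perm (Fin n)} (hz : IsFPF z) {i j : Fin n} (h : (j : ℕ) = i + 1)
    (hw : z i < z j) : z i ≠ i ∧ z i ≠ j ∧ z j ≠ i ∧ z j ≠ j := by
  have hij : i < j := by rw [Fin.lt_def]; omega
  refine ⟨hz.2 i, ?_, ?_, hz.2 j⟩
  · intro e
    have : z j = i := by rw [← e, hz.app]
    rw [e, this] at hw; exact absurd hw (not_lt.2 hij.le)
  · intro e
    have : z i = j := by rw [← e, hz.app]
    rw [e, this] at hw; exact absurd hw (not_lt.2 hij.le)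

theorem fpfLen_conj {z : Equiv.Perm (Fin n)} (hz : IsFPF z) {i j : Fin n} (h : (j : ℕ) = i + 1)
    (hw : z i < z j) : fpfLen (Equiv.swap i j * z * Equiv.swap i j) = fpfLen z + 1 := by
  have h1 := invLen_fpf hz
  have h2 := invLen_fpf (hz.conj i j)
  obtain ⟨a1, a2, a3, a4⟩ := hz.asc h hw
  have h3 : invLen (Equiv.swap i j * z) = invLen z + 1 := by
    rw [← invLen_inv, mul_inv_rev, hz.inv, Equiv.swap_inv, invLen_mul_swap z h hw]
  have h4 := invLen_mul_swap (Equiv.swap i j * z) h (by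
    simp only [Equiv.Perm.mul_apply]
    rw [Equiv.swap_apply_of_ne_of_ne a1 a2, Equiv.swap_apply_of_ne_of_ne a3 a4]; exact hw)
  omega

theorem theta_val (hev : n % 2 = 0) (a : Fin n) : ((theta n hev a : Fin n) : ℕ) =
    if (a : ℕ) % 2 = 0 then (a : ℕ) + 1 else (a : ℕ) - 1 := rfl

theorem fpfLen_theta (hev : n % 2 = 0) : fpfLen (theta n hev) = 0 := by
  unfold fpfLen
  rw [Finset.card_eq_zero, Finset.filter_eq_empty_iff]
  rintro ⟨a, b⟩ _ ⟨h1, h2, h3⟩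
  simp only [Fin.lt_def, theta_val] at h1 h2 h3
  split_ifs at h1 h2 <;> omega

theorem theta_fpf (hev : n % 2 = 0) : IsFPF (theta n hev) := by
  constructor
  · ext a
    simp only [Equiv.Perm.mul_apply, Equiv.Perm.one_apply, theta_val]
    split_ifs <;> omega
  · intro a h
    simp only [Fin.ext_iff, theta_val] at h
    split_ifs at h <;> omega

end Perm

/-! ### Part 5: the two partial actions -/

section Act
variable {n : ℕ}

/-- Demazure action on permutations, letter given by positions. -/
def demF (i j : Fin n) (w : Equiv.Perm (Fin n)) : Option (Equiv.Perm (Fin n)) :=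
  if w i < w j then some (w * Equiv.swap i j) else some w

def dem (a : ℕ) (w : Equiv.Perm (Fin n)) : Option (Equiv.Perm (Fin n)) :=
  if h : a + 1 < n then demF ⟨a, Nat.lt_of_succ_lt h⟩ ⟨a + 1, h⟩ w else none

/-- the Hecke action on fixed-point-free involutions, letter given by positions. -/
def hF (i j : Fin n) (z : Equiv.Perm (Fin n)) : Option (Equiv.Perm (Fin n)) :=
  if z i = j then none else
  if z i < z j then some (Equiv.swap i j * z * Equiv.swap i j) else some z

open Classical in
def hstep (a : ℕ) (z : Equiv.Perm (Fin n)) : Option (Equiv.Perm (Fin n)) :=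
  if IsFPF z then heckeStep a z else none

theorem dem_eq {i j : Fin n} (h : (j : ℕ) = i + 1) (w : Equiv.Perm (Fin n)) :
    dem (i : ℕ) w = demF i j w := by
  have hj := j.isLt
  have e : (⟨(i : ℕ) + 1, by omega⟩ : Fin n) = j := Fin.ext h.symm
  rw [dem, dif_pos (by omega), e]

theorem hstep_eq {i j : Fin n} (h : (j : ℕ) = i + 1) {z : Equiv.Perm (Fin n)} (hz : IsFPF z) :
    hstep (i : ℕ) z = hF i j z := by
  have hj := j.isLt
  have e : (⟨(i : ℕ) + 1, by omega⟩ : Fin n) = j := Fin.ext h.symm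
  rw [hstep, if_pos hz, heckeStep, dif_pos (by omega), e]
  simp only [hF]
  by_cases h1 : z i < z j
  · simp [h1, (hz.asc h h1).2.1]
  · by_cases h2 : z i = j
    · have h3 : z j = i := by rw [← h2, hz.app]
      have hle : i ≤ j := by rw [Fin.le_def]; omega
      simp [h2, h3, hle]
    · have h3 : z j ≠ i := by intro e; apply h2; rw [← e, hz.app]
      have h4 : z j < z i := by
        refine lt_of_le_of_ne (not_lt.1 h1) fun e => ?_
        have := z.injective e
        rw [this] at h; omega
      have h1' := h1
      simp [h2, h3, h4, h4.le]

theorem hstep_none {a : ℕ} (h : ¬ a + 1 < n) (z : Equiv.Perm (Fin n)) : hstep a z = none := by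
  simp [hstep, heckeStep, h]

theorem dem_none {a : ℕ} (h : ¬ a + 1 < n) (z : Equiv.Perm (Fin n)) : dem a z = none := by
  simp [dem, h]

theorem hstep_nfpf {a : ℕ} {z : Equiv.Perm (Fin n)} (h : ¬ IsFPF z) : hstep a z = none := by
  simp [hstep, h]

theorem fpf_conj_iff (i j : Fin n) (z : Equiv.Perm (Fin n)) :
    IsFPF (Equiv.swap i j * z * Equiv.swap i j) ↔ IsFPF z := by
  refine ⟨fun h => ?_, fun h => h.conj i j⟩
  have := h.conj i j
  simpa [mul_assoc] using this

theorem bind_none' {α β : Type*} (o : Option α) : (o.bind fun _ => (none : Option β)) = none := by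
  cases o <;> rfl

theorem swap_braid {i j k : Fin n} (n1 : i ≠ j) (n2 : i ≠ k) (n3 : j ≠ k) :
    Equiv.swap i j * (Equiv.swap j k * Equiv.swap i j) =
      Equiv.swap j k * (Equiv.swap i j * Equiv.swap j k) := by
  have s1 := Equiv.swap_apply_of_ne_of_ne n1 n2
  have s2 := Equiv.swap_apply_of_ne_of_ne n2.symm n3.symm
  ext x
  simp only [Equiv.Perm.mul_apply]
  by_cases h1 : x = i
  · subst h1; simp [s1, s2]
  by_cases h2 : x = j
  · subst h2; simp [s1, s2]
  by_cases h3 : x = k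
  · subst h3; simp [s1, s2]
  simp [Equiv.swap_apply_of_ne_of_ne h1 h2, Equiv.swap_apply_of_ne_of_ne h2 h3]

theorem dem_srel : SRel (dem (n := n)) where
  id a w := by
    by_cases h : a + 1 < n
    · obtain ⟨i, j, hij, rfl⟩ : ∃ i j : Fin n, (j : ℕ) = i + 1 ∧ (i : ℕ) = a :=
        ⟨⟨a, by omega⟩, ⟨a+1, h⟩, rfl, rfl⟩
      have hlt : i < j := by rw [Fin.lt_def]; omega
      have e : dem (n := n) (i : ℕ) = demF i j := funext fun w => dem_eq hij w
      rw [e]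
      by_cases h1 : w i < w j
      · simp [demF, h1, h1.le]
      · simp [demF, h1]
    · simp [dem_none h]
  comm a b hab w := by
    by_cases h : b + 1 < n
    · obtain ⟨i, j, hij, rfl⟩ : ∃ i j : Fin n, (j : ℕ) = i + 1 ∧ (i : ℕ) = a :=
        ⟨⟨a, by omega⟩, ⟨a+1, by omega⟩, rfl, rfl⟩
      obtain ⟨k, l, hkl, rfl⟩ : ∃ i j : Fin n, (j : ℕ) = i + 1 ∧ (i : ℕ) = b :=
        ⟨⟨b, by omega⟩, ⟨b+1, h⟩, rfl, rfl⟩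
      have e : dem (n := n) (i : ℕ) = demF i j := funext fun w => dem_eq hij w
      have e' : dem (n := n) (k : ℕ) = demF k l := funext fun w => dem_eq hkl w
      have n1 : i ≠ k := by intro e; rw [e] at hab; omega
      have n2 : i ≠ l := by intro e; rw [e] at hab; omega
      have n3 : j ≠ k := by intro e; rw [e] at hij; omega
      have n4 : j ≠ l := by intro e; rw [e] at hij; omega
      have c : Equiv.swap i j * Equiv.swap k l = Equiv.swap k l * Equiv.swap i j := by
        apply Equiv.Perm.Disjoint.commute
        intro x
        by_cases hx : x = i ∨ x = j
        · right; rcases hx with rfl | rfl <;> exact Equiv.swap_apply_of_ne_of_ne (by assumption) (by assumption)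
        · push Not at hx; left; exact Equiv.swap_apply_of_ne_of_ne hx.1 hx.2
      have s1 := Equiv.swap_apply_of_ne_of_ne n1 n2
      have s2 := Equiv.swap_apply_of_ne_of_ne n3 n4
      have s3 := Equiv.swap_apply_of_ne_of_ne n1.symm n3.symm
      have s4 := Equiv.swap_apply_of_ne_of_ne n2.symm n4.symm
      rw [e, e']
      by_cases h1 : w i < w j <;> by_cases h2 : w k < w l <;>
        simp [demF, h1, h2, s1, s2, s3, s4, mul_assoc, c]
    · have e' : dem (n := n) b = fun _ => none := funext fun w => dem_none h w
      rw [e', bind_none']; rfl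
  braid a w := by
    by_cases h : a + 1 + 1 < n
    · obtain ⟨i, j, k, hij, hjk, rfl⟩ : ∃ i j k : Fin n, (j : ℕ) = i + 1 ∧ (k : ℕ) = j + 1 ∧ (i : ℕ) = a :=
        ⟨⟨a, by omega⟩, ⟨a+1, by omega⟩, ⟨a+2, h⟩, rfl, rfl, rfl⟩
      have e : dem (n := n) (i : ℕ) = demF i j := funext fun w => dem_eq hij w
      have e' : dem (n := n) (i + 1 : ℕ) = demF j k := funext fun w => by rw [← hij]; exact dem_eq hjk w
      have n1 : i ≠ j := by intro e; rw [e] at hij; omega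
      have n2 : i ≠ k := by intro e; rw [e] at hij; omega
      have n3 : j ≠ k := by intro e; rw [e] at hjk; omega
      have s1 := Equiv.swap_apply_of_ne_of_ne n1 n2
      have s2 := Equiv.swap_apply_of_ne_of_ne n2.symm n3.symm
      have c : Equiv.swap i j * (Equiv.swap j k * Equiv.swap i j) =
          Equiv.swap j k * (Equiv.swap i j * Equiv.swap j k) := by
        exact swap_braid n1 n2 n3
      have m1 : w i ≠ w j := fun h => n1 (w.injective h)
      have m2 : w i ≠ w k := fun h => n2 (w.injective h)
      have m3 : w j ≠ w k := fun h => n3 (w.injective h)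
      rw [e, e']
      rcases lt_or_gt_of_ne m1 with h1 | h1 <;> rcases lt_or_gt_of_ne m2 with h2 | h2 <;>
        rcases lt_or_gt_of_ne m3 with h3 | h3 <;>
        simp [demF, h1, h2, h3, s1, s2, mul_assoc, c, h1.le, h2.le, h3.le, h1.not_gt, h2.not_gt, h3.not_gt] <;>
        first | (exfalso; order) | skip
    · have e' : dem (n := n) (a+1) = fun _ => none := funext fun w => dem_none h w
      rw [e', bind_none']; rfl

theorem hstep_srel : SRel (hstep (n := n)) where
  id a z := by
    by_cases hz : IsFPF z
    swap
    · simp [hstep_nfpf hz]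
    by_cases h : a + 1 < n
    · obtain ⟨i, j, hij, rfl⟩ : ∃ i j : Fin n, (j : ℕ) = i + 1 ∧ (i : ℕ) = a :=
        ⟨⟨a, by omega⟩, ⟨a+1, h⟩, rfl, rfl⟩
      rw [hstep_eq hij hz]
      by_cases h1 : z i < z j
      · obtain ⟨a1, a2, a3, a4⟩ := hz.asc hij h1
        have s1 := Equiv.swap_apply_of_ne_of_ne a1 a2
        have s2 := Equiv.swap_apply_of_ne_of_ne a3 a4
        simp [hF, h1, hstep_eq hij (hz.conj i j), h1.le, s1, s2, h1.not_gt, a4, a2]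
      · by_cases h2 : z i = j
        · simp [hF, h1, h2]
        · simp [hF, h1, h2, hstep_eq hij hz]
    · simp [hstep_none h]
  comm a b hab z := by
    by_cases hz : IsFPF z
    swap
    · simp [hstep_nfpf hz]
    by_cases h : b + 1 < n
    · obtain ⟨i, j, hij, rfl⟩ : ∃ i j : Fin n, (j : ℕ) = i + 1 ∧ (i : ℕ) = a :=
        ⟨⟨a, by omega⟩, ⟨a+1, by omega⟩, rfl, rfl⟩
      obtain ⟨k, l, hkl, rfl⟩ : ∃ i j : Fin n, (j : ℕ) = i + 1 ∧ (i : ℕ) = b :=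
        ⟨⟨b, by omega⟩, ⟨b+1, h⟩, rfl, rfl⟩
      have e : ∀ {z : Equiv.Perm (Fin n)}, IsFPF z → hstep (n := n) (i : ℕ) z = hF i j z := hstep_eq hij
      have e' : ∀ {z : Equiv.Perm (Fin n)}, IsFPF z → hstep (n := n) (k : ℕ) z = hF k l z := hstep_eq hkl
      have l1 : i < j := by rw [Fin.lt_def]; omega
      have l2 : k < l := by rw [Fin.lt_def]; omega
      have n1 : i ≠ k := by intro e; rw [e] at hab; omega
      have n2 : i ≠ l := by intro e; rw [e] at hab; omega
      have n3 : j ≠ k := by intro e; rw [e] at hij; omega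
      have n4 : j ≠ l := by intro e; rw [e] at hij; omega
      have c : Equiv.swap i j * Equiv.swap k l = Equiv.swap k l * Equiv.swap i j := by
        apply Equiv.Perm.Disjoint.commute
        intro x
        by_cases hx : x = i ∨ x = j
        · right; rcases hx with rfl | rfl <;> exact Equiv.swap_apply_of_ne_of_ne (by assumption) (by assumption)
        · push Not at hx; left; exact Equiv.swap_apply_of_ne_of_ne hx.1 hx.2
      have c' : ∀ x : Equiv.Perm (Fin n), Equiv.swap i j * (Equiv.swap k l * x) = Equiv.swap k l * (Equiv.swap i j * x) := by
        intro x; rw [← mul_assoc, c, mul_assoc]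
      have s1 := Equiv.swap_apply_of_ne_of_ne n1 n2
      have s2 := Equiv.swap_apply_of_ne_of_ne n3 n4
      have s3 := Equiv.swap_apply_of_ne_of_ne n1.symm n3.symm
      have s4 := Equiv.swap_apply_of_ne_of_ne n2.symm n4.symm
      rw [e hz, e' hz]
      by_cases p1 : z i = k ∧ z j = l
      · obtain ⟨p1, p2⟩ := p1
        have p3 : z k = i := by rw [← p1, hz.app]
        have p4 : z l = j := by rw [← p2, hz.app]
        have E : Equiv.swap k l * z * Equiv.swap k l = Equiv.swap i j * z * Equiv.swap i j := by
          ext x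
          simp only [Equiv.Perm.mul_apply]
          by_cases hx1 : x = i
          · subst hx1; simp [s1, p1, p2, s4]
          by_cases hx2 : x = j
          · subst hx2; simp [s2, p1, p2, s3]
          by_cases hx3 : x = k
          · subst hx3; simp [s3, p3, p4, s2]
          by_cases hx4 : x = l
          · subst hx4; simp [s4, p3, p4, s1]
          rw [Equiv.swap_apply_of_ne_of_ne hx3 hx4, Equiv.swap_apply_of_ne_of_ne hx1 hx2,
            Equiv.swap_apply_of_ne_of_ne, Equiv.swap_apply_of_ne_of_ne]
          · intro e; apply hx3; rw [← p1, ← e, hz.app]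
          · intro e; apply hx4; rw [← p2, ← e, hz.app]
          · intro e; apply hx1; rw [← p3, ← e, hz.app]
          · intro e; apply hx2; rw [← p4, ← e, hz.app]
        simp [hF, p1, p2, p3, p4, l1, l2, E, n3.symm, n2]
        rw [e (hz.conj i j), e' (hz.conj i j)]
        simp [hF, p1, p2, p3, p4, s1, s2, s3, s4, l1.not_gt, l2.not_gt, n2.symm, n4, l1.le, l2.le, n2, n4.symm]
      by_cases p2 : z i = l ∧ z j = k
      · obtain ⟨p1, p2⟩ := p2
        have p3 : z k = j := by rw [← p2, hz.app]
        have p4 : z l = i := by rw [← p1, hz.app]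
        simp [hF, p1, p2, p3, p4, l1.not_gt, l2.not_gt, n4, n4.symm, e hz, e' hz]
      have q1 : ¬ (z k = i ∧ z l = j) := by
        rintro ⟨h1, h2⟩; apply p1; rw [← h1, ← h2]; simp [hz.app]
      have q2 : ¬ (z k = j ∧ z l = i) := by
        rintro ⟨h1, h2⟩; apply p2; rw [← h1, ← h2]; simp [hz.app]
      have t1 := swap_lt_iff hkl (z i) (z j) p1 p2
      have t2 := swap_lt_iff hij (z k) (z l) q1 q2
      have t3 : Equiv.swap k l (z i) = j ↔ z i = j := by
        conv_lhs => rw [← s2]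
        exact (Equiv.swap k l).injective.eq_iff
      have t4 : Equiv.swap i j (z k) = l ↔ z k = l := by
        conv_lhs => rw [← s4]
        exact (Equiv.swap i j).injective.eq_iff
      by_cases h1 : z i < z j <;> by_cases h2 : z k < z l <;> by_cases h3 : z i = j <;> by_cases h4 : z k = l <;>
        simp [hF, h1, h2, h3, h4, e, e', hz, s1, s2, s3, s4, fpf_conj_iff, t1, t2, t3, t4] <;>
        simp [mul_assoc, c, c']
    · have e' : hstep (n := n) b = fun _ => none := funext fun w => hstep_none h w
      rw [e', bind_none']; rfl
  braid a z := by
    by_cases hz : IsFPF z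
    swap
    · simp [hstep_nfpf hz]
    by_cases h : a + 1 + 1 < n
    · obtain ⟨i, j, k, hij, hjk, rfl⟩ : ∃ i j k : Fin n, (j : ℕ) = i + 1 ∧ (k : ℕ) = j + 1 ∧ (i : ℕ) = a :=
        ⟨⟨a, by omega⟩, ⟨a+1, by omega⟩, ⟨a+2, h⟩, rfl, rfl, rfl⟩
      have e : ∀ {z : Equiv.Perm (Fin n)}, IsFPF z → hstep (n := n) (i : ℕ) z = hF i j z := hstep_eq hij
      have e' : ∀ {z : Equiv.Perm (Fin n)}, IsFPF z → hstep (n := n) (i + 1 : ℕ) z = hF j k z := by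
        intro z hz; rw [← hij]; exact hstep_eq hjk hz
      have l1 : i < j := by rw [Fin.lt_def]; omega
      have l2 : j < k := by rw [Fin.lt_def]; omega
      have l3 : i < k := l1.trans l2
      have n1 : i ≠ j := l1.ne
      have n2 : i ≠ k := l3.ne
      have n3 : j ≠ k := l2.ne
      have s1 := Equiv.swap_apply_of_ne_of_ne n1 n2
      have s2 := Equiv.swap_apply_of_ne_of_ne n2.symm n3.symm
      have c := swap_braid n1 n2 n3
      have c' : ∀ x : Equiv.Perm (Fin n), Equiv.swap i j * (Equiv.swap j k * (Equiv.swap i j * x)) =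
          Equiv.swap j k * (Equiv.swap i j * (Equiv.swap j k * x)) := by
        intro x; simpa [mul_assoc] using congrArg (fun y => y * x) c
      have out : ∀ x : Fin n, x ≠ i → x ≠ j → x ≠ k → Equiv.swap i j x = x ∧ Equiv.swap j k x = x ∧
          ((x < i ∧ x < j ∧ x < k ∧ ¬ i < x ∧ ¬ j < x ∧ ¬ k < x) ∨
            (i < x ∧ j < x ∧ k < x ∧ ¬ x < i ∧ ¬ x < j ∧ ¬ x < k)) := by
        intro x x1 x2 x3
        refine ⟨Equiv.swap_apply_of_ne_of_ne x1 x2, Equiv.swap_apply_of_ne_of_ne x2 x3, ?_⟩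
        simp only [Fin.lt_def, ne_eq, Fin.ext_iff] at *
        omega
      rw [e hz, e' hz]
      by_cases g1 : z i = j
      · have g2 : z j = i := by rw [← g1, hz.app]
        have x1 : z k ≠ i := by rw [← g2]; exact fun h => n3 (z.injective h.symm)
        have x2 : z k ≠ j := by rw [← g1]; exact fun h => n2 (z.injective h.symm)
        obtain ⟨o1, o2, o3⟩ := out _ x1 x2 (hz.2 k)
        rcases o3 with ⟨o3, o4, o5, o6, o7, o8⟩ | ⟨o3, o4, o5, o6, o7, o8⟩ <;>
          simp [hF, e, e', hz, fpf_conj_iff, *, n1.symm, n2.symm, n3.symm]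
      by_cases g1 : z j = k
      · have g2 : z k = j := by rw [← g1, hz.app]
        have x1 : z i ≠ j := by rw [← g2]; exact fun h => n2 (z.injective h)
        have x2 : z i ≠ k := by rw [← g1]; exact fun h => n1 (z.injective h)
        obtain ⟨o1, o2, o3⟩ := out _ (hz.2 i) x1 x2
        rcases o3 with ⟨o3, o4, o5, o6, o7, o8⟩ | ⟨o3, o4, o5, o6, o7, o8⟩ <;>
          simp [hF, e, e', hz, fpf_conj_iff, *, n1.symm, n2.symm, n3.symm]
      by_cases g1 : z i = k
      · have g2 : z k = i := by rw [← g1, hz.app]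
        have x1 : z j ≠ i := by rw [← g2]; exact fun h => n3 (z.injective h)
        have x2 : z j ≠ k := by rw [← g1]; exact fun h => n1 (z.injective h.symm)
        obtain ⟨o1, o2, o3⟩ := out _ x1 (hz.2 j) x2
        rcases o3 with ⟨o3, o4, o5, o6, o7, o8⟩ | ⟨o3, o4, o5, o6, o7, o8⟩ <;>
          simp [hF, e, e', hz, fpf_conj_iff, *, n1.symm, n2.symm, n3.symm]
      have f1 : z j ≠ i := by intro h; apply ‹¬ z i = j›; rw [← h, hz.app]
      have f2 : z k ≠ j := by intro h; apply ‹¬ z j = k›; rw [← h, hz.app]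
      have f3 : z k ≠ i := by intro h; apply ‹¬ z i = k›; rw [← h, hz.app]
      obtain ⟨o1, o2, -⟩ := out (z i) (hz.2 i) (by assumption) (by assumption)
      obtain ⟨o3, o4, -⟩ := out (z j) f1 (hz.2 j) (by assumption)
      obtain ⟨o5, o6, -⟩ := out (z k) f3 f2 (hz.2 k)
      have y1 := hz.2 i
      have y2 := hz.2 j
      have y3 := hz.2 k
      clear out
      have m1 : z i ≠ z j := fun h => n1 (z.injective h)
      have m2 : z i ≠ z k := fun h => n2 (z.injective h)
      have m3 : z j ≠ z k := fun h => n3 (z.injective h)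
      rcases lt_or_gt_of_ne m1 with h1 | h1 <;> rcases lt_or_gt_of_ne m2 with h2 | h2 <;>
        rcases lt_or_gt_of_ne m3 with h3 | h3 <;>
        first
        | (exfalso; order)
        | (simp [hF, e, e', hz, fpf_conj_iff, *, n1.symm, n2.symm, n3.symm, h1.not_gt, h2.not_gt, h3.not_gt] <;>
            simp [mul_assoc, c, c'])
    · have e' : hstep (n := n) (a+1) = fun _ => none := funext fun w => hstep_none h w
      rw [e', bind_none']; rfl

end Act

/-! ### Part 6: reduced words and well-definedness -/

section Red
variable {n : ℕ}

theorem hstep_some {a : ℕ} {t t' : Equiv.Perm (Fin n)} (h : hstep a t = some t') :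
    IsFPF t ∧ IsFPF t' ∧ fpfLen t' ≤ fpfLen t + 1 := by
  by_cases hz : IsFPF t
  swap
  · simp [hstep_nfpf hz] at h
  by_cases hn : a + 1 < n
  swap
  · simp [hstep_none hn] at h
  obtain ⟨i, j, hij, rfl⟩ : ∃ i j : Fin n, (j : ℕ) = i + 1 ∧ (i : ℕ) = a :=
    ⟨⟨a, by omega⟩, ⟨a+1, hn⟩, rfl, rfl⟩
  rw [hstep_eq hij hz, hF] at h
  split_ifs at h with h1 h2
  · obtain rfl := Option.some.inj h
    exact ⟨hz, hz.conj i j, (fpfLen_conj hz hij h2).le⟩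
  · obtain rfl := Option.some.inj h
    exact ⟨hz, hz, by omega⟩

theorem dem_some {a : ℕ} {t t' : Equiv.Perm (Fin n)} (h : dem a t = some t') :
    invLen t' ≤ invLen t + 1 := by
  by_cases hn : a + 1 < n
  swap
  · simp [dem_none hn] at h
  obtain ⟨i, j, hij, rfl⟩ : ∃ i j : Fin n, (j : ℕ) = i + 1 ∧ (i : ℕ) = a :=
    ⟨⟨a, by omega⟩, ⟨a+1, hn⟩, rfl, rfl⟩
  rw [dem_eq hij, demF] at h
  split_ifs at h with h1
  · obtain rfl := Option.some.inj h
    exact (invLen_mul_swap _ hij h1).le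
  · obtain rfl := Option.some.inj h
    omega

theorem run_snoc {T : Type*} (s : ℕ → T → Option T) (l : List ℕ) (a : ℕ) (o : Option T) :
    run s (l ++ [a]) o = (run s l o).bind (s a) := by
  simp [run]

theorem run_append {T : Type*} (s : ℕ → T → Option T) (l l' : List ℕ) (o : Option T) :
    run s (l ++ l') o = run s l' (run s l o) := by
  simp [run]

theorem run_hecke {t : Equiv.Perm (Fin n)} (ht : IsFPF t) (l : List ℕ) :
    run hstep l (some t) = heckeApply l t ∧
      ∀ t', run hstep l (some t) = some t' → IsFPF t' ∧ fpfLen t' ≤ fpfLen t + l.length := by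
  induction l using List.reverseRecOn with
  | nil =>
    refine ⟨rfl, ?_⟩
    intro t' h
    obtain rfl := Option.some.inj (show some t = some t' from h)
    exact ⟨ht, by simp⟩
  | append_singleton l a ih =>
    obtain ⟨ih1, ih2⟩ := ih
    constructor
    · have e : heckeApply (l ++ [a]) t = (heckeApply l t).bind (heckeStep a) := by simp [heckeApply]
      rw [e, run_snoc, ← ih1]
      rcases hr : run hstep l (some t) with _ | t'
      · rfl
      · have := (ih2 t' hr).1
        simp [hstep, this]
    · intro t' h
      rw [run_snoc] at h
      rcases hr : run hstep l (some t) with _ | t''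
      · simp [hr] at h
      · rw [hr, Option.bind_some] at h
        have h1 := hstep_some h
        have h2 := ih2 _ hr
        refine ⟨h1.2.1, ?_⟩
        simp only [List.length_append, List.length_singleton]
        omega

theorem swapAt_eq {i j : Fin n} (h : (j : ℕ) = i + 1) : swapAt n (i : ℕ) = Equiv.swap i j := by
  have hj := j.isLt
  have e : (⟨(i : ℕ) + 1, by omega⟩ : Fin n) = j := Fin.ext h.symm
  rw [swapAt, dif_pos (by omega), e]

theorem wordToPerm_snoc (l : List ℕ) (a : ℕ) :
    wordToPerm n (l ++ [a]) = wordToPerm n l * swapAt n a := by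
  simp [wordToPerm]

theorem val_ne {w : Equiv.Perm (Fin n)} {i j : Fin n} (h : (j : ℕ) = i + 1) : w i ≠ w j := by
  intro e
  have := w.injective e
  rw [this] at h; omega

theorem invLen_word (l : List ℕ) (hl : ∀ a ∈ l, a + 1 < n) : invLen (wordToPerm n l) ≤ l.length := by
  induction l using List.reverseRecOn with
  | nil => simp [wordToPerm, invLen_one]
  | append_singleton l a ih =>
    have ha : a + 1 < n := hl a (by simp)
    have ih := ih (fun b hb => hl b (by simp [hb]))
    obtain ⟨i, j, hij, rfl⟩ : ∃ i j : Fin n, (j : ℕ) = i + 1 ∧ (i : ℕ) = a :=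
      ⟨⟨a, by omega⟩, ⟨a+1, ha⟩, rfl, rfl⟩
    rw [wordToPerm_snoc, swapAt_eq hij]
    simp only [List.length_append, List.length_singleton]
    rcases lt_or_gt_of_ne (val_ne (w := wordToPerm n l) hij) with h | h
    · rw [invLen_mul_swap _ hij h]; omega
    · have := invLen_mul_swap' _ hij h; omega

theorem red_snoc {i j : Fin n} (h : (j : ℕ) = i + 1) (w : Equiv.Perm (Fin n)) (l : List ℕ) :
    IsReducedWord n w (l ++ [(i : ℕ)]) ↔ w j < w i ∧ IsReducedWord n (w * Equiv.swap i j) l := by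
  have hj := j.isLt
  constructor
  · rintro ⟨h1, h2, h3⟩
    have h1' : ∀ a ∈ l, a + 1 < n := fun b hb => h1 b (by simp [hb])
    rw [wordToPerm_snoc, swapAt_eq h] at h2
    have h2' : wordToPerm n l = w * Equiv.swap i j := by
      rw [← h2, mul_assoc, Equiv.swap_mul_self, mul_one]
    have h4 := invLen_word l h1'
    rw [h2'] at h4
    simp only [List.length_append, List.length_singleton] at h3
    rcases lt_or_gt_of_ne (val_ne (w := w) h) with hw | hw
    · rw [invLen_mul_swap _ h hw] at h4; omega
    · have := invLen_mul_swap' _ h hw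
      exact ⟨hw, h1', h2', by omega⟩
  · rintro ⟨hw, h1, h2, h3⟩
    have := invLen_mul_swap' _ h hw
    refine ⟨?_, ?_, ?_⟩
    · intro b hb
      rcases List.mem_append.1 hb with hb | hb
      · exact h1 b hb
      · rw [List.mem_singleton.1 hb]; omega
    · rw [wordToPerm_snoc, swapAt_eq h, h2, mul_assoc, Equiv.swap_mul_self, mul_one]
    · simp only [List.length_append, List.length_singleton]; omega

theorem exists_red (w : Equiv.Perm (Fin n)) : ∃ l, IsReducedWord n w l := by
  induction hm : invLen w generalizing w with
  | zero =>
    refine ⟨[], by simp, ?_, by simp [hm]⟩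
    by_contra hc
    obtain ⟨i, j, hij, hlt⟩ := exists_desc w (fun e => hc (by rw [e]; simp [wordToPerm]))
    have := invLen_mul_swap' w hij hlt
    omega
  | succ m ih =>
    have hw : w ≠ 1 := by rintro rfl; rw [invLen_one] at hm; omega
    obtain ⟨i, j, hij, hlt⟩ := exists_desc w hw
    have := invLen_mul_swap' w hij hlt
    obtain ⟨l, hl⟩ := ih (w * Equiv.swap i j) (by omega)
    exact ⟨l ++ [(i : ℕ)], (red_snoc hij w l).2 ⟨hlt, hl⟩⟩

/-- Matsumoto's theorem for a partial action. -/
theorem run_unique {T : Type*} {s : ℕ → T → Option T} (hs : SRel s) (o : Option T) (m : ℕ) :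
    ∀ (w : Equiv.Perm (Fin n)) (l l' : List ℕ), l.length ≤ m → IsReducedWord n w l →
      IsReducedWord n w l' → run s l o = run s l' o := by
  induction m with
  | zero =>
    intro w l l' hm h h'
    have e := h.2.2.trans h'.2.2.symm
    have : l = [] := List.length_eq_zero_iff.1 (by omega)
    have h2 : l' = [] := List.length_eq_zero_iff.1 (by omega)
    rw [this, h2]
  | succ m ih =>
    intro w l l' hm h h'
    have e := h.2.2.trans h'.2.2.symm
    rcases List.eq_nil_or_concat' l with rfl | ⟨p, a, rfl⟩
    · have h2 : l' = [] := List.length_eq_zero_iff.1 (by simpa using e.symm)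
      rw [h2]
    rcases List.eq_nil_or_concat' l' with rfl | ⟨p', b, rfl⟩
    · simp at e
    simp only [List.length_append, List.length_singleton] at hm e
    have ha : a + 1 < n := h.1 a (by simp)
    have hb : b + 1 < n := h'.1 b (by simp)
    have main : ∀ (a b : ℕ) (p p' : List ℕ), p.length ≤ m → p'.length ≤ m → a < b → b + 1 < n →
        IsReducedWord n w (p ++ [a]) → IsReducedWord n w (p' ++ [b]) →
        run s (p ++ [a]) o = run s (p' ++ [b]) o := by
      clear! a b p p'
      intro a b p p' hp hp' hab hb h h'
      by_cases hab' : a + 1 = b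
      · obtain ⟨i, j, k, hij, hjk, rfl⟩ : ∃ i j k : Fin n, (j : ℕ) = i + 1 ∧ (k : ℕ) = j + 1 ∧ (i : ℕ) = a :=
          ⟨⟨a, by omega⟩, ⟨a+1, by omega⟩, ⟨a+2, by omega⟩, rfl, rfl, rfl⟩
        obtain rfl : (j : ℕ) = b := by omega
        have n1 : i ≠ j := by intro e; rw [e] at hij; omega
        have n2 : i ≠ k := by intro e; rw [e] at hij; omega
        have n3 : j ≠ k := by intro e; rw [e] at hjk; omega
        have s1 := Equiv.swap_apply_of_ne_of_ne n1 n2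
        have s2 := Equiv.swap_apply_of_ne_of_ne n2.symm n3.symm
        rw [red_snoc hij] at h
        rw [red_snoc hjk] at h'
        obtain ⟨q, hq⟩ := exists_red (w * Equiv.swap i j * Equiv.swap j k * Equiv.swap i j)
        have hq' : IsReducedWord n (w * Equiv.swap j k * Equiv.swap i j * Equiv.swap j k) q := by
          have c := swap_braid n1 n2 n3
          have : w * Equiv.swap j k * Equiv.swap i j * Equiv.swap j k =
            w * Equiv.swap i j * Equiv.swap j k * Equiv.swap i j := by simp only [mul_assoc, c]
          rwa [this]
        have hd := h.1
        have hd' := h'.1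
        have r1 : IsReducedWord n (w * Equiv.swap i j) (q ++ [(i : ℕ)] ++ [(j : ℕ)]) := by
          rw [red_snoc hjk, red_snoc hij]
          refine ⟨?_, ?_, hq⟩
          · simpa [s2] using hd'.trans hd
          · simpa [s1, s2] using hd'
        have r2 : IsReducedWord n (w * Equiv.swap j k) (q ++ [(j : ℕ)] ++ [(i : ℕ)]) := by
          rw [red_snoc hij, red_snoc hjk]
          refine ⟨?_, ?_, hq'⟩
          · simpa [s1] using hd'.trans hd
          · simpa [s1, s2] using hd
        rw [run_snoc, run_snoc, ih _ p _ hp h.2 r1, ih _ p' _ hp' h'.2 r2]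
        simp only [run_snoc]
        rcases run s q o with _ | t
        · rfl
        · simp only [Option.bind_some]
          rw [hij]; exact hs.braid i t
      · obtain ⟨i, j, hij, rfl⟩ : ∃ i j : Fin n, (j : ℕ) = i + 1 ∧ (i : ℕ) = a :=
          ⟨⟨a, by omega⟩, ⟨a+1, by omega⟩, rfl, rfl⟩
        obtain ⟨k, l, hkl, rfl⟩ : ∃ i j : Fin n, (j : ℕ) = i + 1 ∧ (i : ℕ) = b :=
          ⟨⟨b, by omega⟩, ⟨b+1, hb⟩, rfl, rfl⟩
        have n1 : i ≠ k := by intro e; rw [e] at hab; omega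
        have n2 : i ≠ l := by intro e; rw [e] at hab; omega
        have n3 : j ≠ k := by intro e; rw [e] at hij; omega
        have n4 : j ≠ l := by intro e; rw [e] at hij; omega
        have c : Equiv.swap i j * Equiv.swap k l = Equiv.swap k l * Equiv.swap i j := by
          apply Equiv.Perm.Disjoint.commute
          intro x
          by_cases hx : x = i ∨ x = j
          · right; rcases hx with rfl | rfl <;> exact Equiv.swap_apply_of_ne_of_ne (by assumption) (by assumption)
          · push Not at hx; left; exact Equiv.swap_apply_of_ne_of_ne hx.1 hx.2
        have s1 := Equiv.swap_apply_of_ne_of_ne n1 n2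
        have s2 := Equiv.swap_apply_of_ne_of_ne n3 n4
        have s3 := Equiv.swap_apply_of_ne_of_ne n1.symm n3.symm
        have s4 := Equiv.swap_apply_of_ne_of_ne n2.symm n4.symm
        rw [red_snoc hij] at h
        rw [red_snoc hkl] at h'
        obtain ⟨q, hq⟩ := exists_red (w * Equiv.swap i j * Equiv.swap k l)
        have hq' : IsReducedWord n (w * Equiv.swap k l * Equiv.swap i j) q := by
          rwa [mul_assoc, ← c, ← mul_assoc]
        have r1 : IsReducedWord n (w * Equiv.swap i j) (q ++ [(k : ℕ)]) := by
          rw [red_snoc hkl]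
          exact ⟨by simpa [s3, s4] using h'.1, hq⟩
        have r2 : IsReducedWord n (w * Equiv.swap k l) (q ++ [(i : ℕ)]) := by
          rw [red_snoc hij]
          exact ⟨by simpa [s1, s2] using h.1, hq'⟩
        rw [run_snoc, run_snoc, ih _ p _ hp h.2 r1, ih _ p' _ hp' h'.2 r2]
        simp only [run_snoc]
        rcases run s q o with _ | t
        · rfl
        · simp only [Option.bind_some]
          exact (hs.comm i k (by omega) t).symm
    rcases lt_trichotomy a b with hab | rfl | hab
    · exact main a b p p' (by omega) (by omega) hab hb h h'
    · obtain ⟨i, j, hij, rfl⟩ : ∃ i j : Fin n, (j : ℕ) = i + 1 ∧ (i : ℕ) = a :=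
        ⟨⟨a, by omega⟩, ⟨a+1, ha⟩, rfl, rfl⟩
      rw [red_snoc hij] at h h'
      rw [run_snoc, run_snoc, ih _ p p' (by omega) h.2 h'.2]
    · exact (main b a p' p (by omega) (by omega) hab ha h' h).symm

/-- the value of the action of a permutation. -/
def tau {T : Type*} (s : ℕ → T → Option T) (o : Option T) (w : Equiv.Perm (Fin n)) : Option T :=
  run s (exists_red w).choose o

theorem tau_eq {T : Type*} {s : ℕ → T → Option T} (hs : SRel s) (o : Option T)
    {w : Equiv.Perm (Fin n)} {l : List ℕ} (h : IsReducedWord n w l) : tau s o w = run s l o :=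
  run_unique hs o _ w _ _ le_rfl (exists_red w).choose_spec h

theorem tau_step {T : Type*} {s : ℕ → T → Option T} (hs : SRel s)
    (hs' : ∀ a, ¬ a + 1 < n → ∀ t, s a t = none) (o : Option T) (a : ℕ)
    (w : Equiv.Perm (Fin n)) : (dem a w).bind (tau s o) = (tau s o w).bind (s a) := by
  by_cases hn : a + 1 < n
  swap
  · rw [dem_none hn, show s a = fun _ => none from funext (hs' a hn), bind_none']; rfl
  obtain ⟨i, j, hij, rfl⟩ : ∃ i j : Fin n, (j : ℕ) = i + 1 ∧ (i : ℕ) = a :=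
    ⟨⟨a, by omega⟩, ⟨a+1, hn⟩, rfl, rfl⟩
  rw [dem_eq hij, demF]
  rcases lt_or_gt_of_ne (val_ne (w := w) hij) with h | h
  · rw [if_pos h, Option.bind_some]
    obtain ⟨l, hl⟩ := exists_red w
    have : IsReducedWord n (w * Equiv.swap i j) (l ++ [(i : ℕ)]) := by
      rw [red_snoc hij]
      refine ⟨by simpa using h, ?_⟩
      rwa [mul_assoc, Equiv.swap_mul_self, mul_one]
    rw [tau_eq hs o this, tau_eq hs o hl, run_snoc]
  · rw [if_neg h.not_gt, Option.bind_some]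
    obtain ⟨l, hl⟩ := exists_red (w * Equiv.swap i j)
    have := (red_snoc hij w l).2 ⟨h, hl⟩
    rw [tau_eq hs o this, run_snoc, Option.bind_assoc]
    congr 1
    funext t
    exact (hs.id _ t).symm

theorem tau_one {T : Type*} {s : ℕ → T → Option T} (hs : SRel s) (o : Option T) :
    tau s o (1 : Equiv.Perm (Fin n)) = o := by
  rw [tau_eq hs o (l := []) ⟨by simp, by simp [wordToPerm], by simp [invLen_one]⟩]; rfl

theorem mem_Bfpf (hev : n % 2 = 0) (z w : Equiv.Perm (Fin n)) :
    w ∈ Bfpf n hev z ↔ tau hstep (some (theta n hev)) w = some z := by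
  unfold Bfpf
  simp only [Finset.mem_filter, Finset.mem_univ, true_and]
  constructor
  · rintro ⟨l, hl, h⟩
    rw [tau_eq hstep_srel _ hl, (run_hecke (theta_fpf hev) l).1, h]
  · intro h
    obtain ⟨l, hl⟩ := exists_red w
    refine ⟨l, hl, ?_⟩
    rw [← (run_hecke (theta_fpf hev) l).1, ← tau_eq hstep_srel _ hl, h]

theorem len_Bfpf (hev : n % 2 = 0) (z w : Equiv.Perm (Fin n)) (h : w ∈ Bfpf n hev z) :
    fpfLen z ≤ invLen w := by
  obtain ⟨l, hl⟩ := exists_red w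
  rw [mem_Bfpf, tau_eq hstep_srel _ hl] at h
  have := ((run_hecke (theta_fpf hev) l).2 z h).2
  rw [fpfLen_theta, hl.2.2] at this
  omega

end Red

/-! ### Part 7: intertwining and descending induction -/

section Main
variable {n : ℕ}

theorem wordOp_intertwine {R T T' : Type*} [CommRing R] (β : R)
    (u : ℕ → Module.End R (T → R)) (u' : ℕ → Module.End R (T' → R))
    (φ : (T → R) →ₗ[R] (T' → R)) (h : ∀ a f, φ (u a f) = u' a (φ f)) (L : List (ℕ × R)) :
    ∀ f, φ (wordOp β u L f) = wordOp β u' L (φ f) := by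
  induction L with
  | nil => intro f; rfl
  | cons p L ih =>
    intro f
    simp only [wordOp, Module.End.mul_apply]
    rw [ih]
    simp [hh, h]

theorem gvec_sum (hev : n % 2 = 0) (z : Equiv.Perm (Fin n)) :
    (gvec hstep (theta n hev) z : MvPolynomial (Fin n) Rb) =
      ∑ w ∈ Bfpf n hev z, (gvec dem 1 w : MvPolynomial (Fin n) Rb) := by
  classical
  have h1 := wordOp_intertwine (cb n)
    (fun a => (opF (dem (n := n) a) : Module.End (MvPolynomial (Fin n) Rb) _))
    (fun a => (opF (hstep (n := n) a) : Module.End (MvPolynomial (Fin n) Rb) _))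
    (opF (tau hstep (some (theta n hev)))) (by
      intro a f
      rw [opF_comp, opF_comp]
      congr 1; congr 1; funext w
      exact tau_step hstep_srel (fun a ha t => hstep_none ha t) _ a w)
    (Ql (xv n) 0 0 (n-1)) (Pi.single 1 1)
  have h2 : opF (tau hstep (some (theta n hev))) (Pi.single (1 : Equiv.Perm (Fin n)) (1 : MvPolynomial (Fin n) Rb))
      = Pi.single (theta n hev) 1 := by
    funext w
    rw [opF_single, tau_one hstep_srel, Pi.single_apply]
    simp [eq_comm]
  rw [h2] at h1
  have h3 := congrFun h1 z
  rw [opF_apply] at h3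
  rw [gvec, ← h3, ← Finset.sum_filter]
  refine Finset.sum_congr ?_ fun _ _ => rfl
  ext w
  simp [mem_Bfpf]

theorem divDiff_unique {i j : Fin n} (hij : (j : ℕ) = i + 1) {f g g' : MvPolynomial (Fin n) Rb}
    (h : IsDivDiffB i j f g) (h' : IsDivDiffB i j f g') : g = g' := by
  have hne : (X i - X j : MvPolynomial (Fin n) Rb) ≠ 0 := by
    intro e
    have := X_injective (sub_eq_zero.1 e)
    rw [this] at hij; omega
  exact mul_left_cancel₀ hne (h.trans h'.symm)

theorem divDiff_smul {i j : Fin n} {f g : MvPolynomial (Fin n) Rb} (k : ℕ)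
    (h : IsDivDiffB i j f g) : IsDivDiffB i j (C bb ^ k * f) (C bb ^ k * g) := by
  unfold IsDivDiffB at *
  simp only [map_mul, map_pow, rename_C] at *
  linear_combination (C bb ^ k) * h

theorem cbb_ne : (C bb : MvPolynomial (Fin n) Rb) ≠ 0 := by
  rw [Ne, C_eq_zero]
  exact Polynomial.X_ne_zero

theorem fk_all (Gr : Equiv.Perm (Fin n) → MvPolynomial (Fin n) Rb) (hGr : IsGrothFam n Gr)
    (hbase : (gvec dem 1 (revPerm n) : MvPolynomial (Fin n) Rb) =
      C bb ^ invLen (revPerm n) * grTop n) (w : Equiv.Perm (Fin n)) :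
    (gvec dem 1 w : MvPolynomial (Fin n) Rb) = C bb ^ invLen w * Gr w := by
  induction hm : n * n - invLen w using Nat.strong_induction_on generalizing w with
  | _ m ih =>
  by_cases hw : w = revPerm n
  · rw [hw, hbase, hGr.1]
  obtain ⟨i, j, hij, hlt⟩ := exists_asc w hw
  have hl := invLen_mul_swap w hij hlt
  have hle := invLen_le (w * Equiv.swap i j)
  have h := ih _ (by omega) (w * Equiv.swap i j) rfl
  have h1 := hGr.2 (w * Equiv.swap i j) i j hij (by simpa using hlt)
  have hww : w * Equiv.swap i j * Equiv.swap i j = w := by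
    rw [mul_assoc, Equiv.swap_mul_self, mul_one]
  rw [hww] at h1
  have h2 := divDiff_smul (invLen w + 1) h1
  rw [← hl, ← h, hl] at h2
  have h3 : IsDivDiffB i j (gvec dem 1 (w * Equiv.swap i j) : MvPolynomial (Fin n) Rb)
      (C bb * gvec dem 1 w) := by
    refine gvec_rec dem dem_srel 1 i j hij w (w * Equiv.swap i j) ?_ ?_ ?_
    · intro e; rw [← e] at hl; omega
    · intro y
      rw [dem_eq hij, demF]
      split_ifs with hy
      · simp only [Option.some.injEq]
        constructor
        · intro e; right; exact mul_right_cancel e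
        · rintro (rfl | rfl)
          · exact absurd hy (by simpa using hlt.le)
          · rfl
      · simp only [Option.some.injEq]
        constructor
        · intro e; exact Or.inl e
        · rintro (rfl | rfl)
          · rfl
          · exact absurd hlt hy
    · intro y
      rw [dem_eq hij, demF]
      split_ifs with hy
      · intro e
        obtain rfl := Option.some.inj e
        exact absurd hy (by simpa using hlt.le)
      · intro e
        obtain rfl := Option.some.inj e
        exact hy hlt
  have h4 := divDiff_unique hij h3 h2
  rw [pow_succ', mul_assoc] at h4
  exact mul_left_cancel₀ cbb_ne h4

theorem sp_all (hev : n % 2 = 0) (G : Equiv.Perm (Fin n) → MvPolynomial (Fin n) Rb)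
    (hG : IsSpFam n G)
    (hbase : (gvec hstep (theta n hev) (revPerm n) : MvPolynomial (Fin n) Rb) =
      C bb ^ fpfLen (revPerm n) * spTop n) (z : Equiv.Perm (Fin n)) (hz : IsFPF z) :
    (gvec hstep (theta n hev) z : MvPolynomial (Fin n) Rb) = C bb ^ fpfLen z * G z := by
  induction hm : n * n - fpfLen z using Nat.strong_induction_on generalizing z with
  | _ m ih =>
  by_cases hw : z = revPerm n
  · rw [hw, hbase, hG.1]
  obtain ⟨i, j, hij, hlt⟩ := exists_asc z hw
  obtain ⟨a1, a2, a3, a4⟩ := hz.asc hij hlt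
  have s1 := Equiv.swap_apply_of_ne_of_ne a1 a2
  have s2 := Equiv.swap_apply_of_ne_of_ne a3 a4
  have hl := fpfLen_conj hz hij hlt
  have hle := fpfLen_le (Equiv.swap i j * z * Equiv.swap i j)
  have hz' := hz.conj i j
  have hww : Equiv.swap i j * (Equiv.swap i j * z * Equiv.swap i j) * Equiv.swap i j = z := by
    simp [mul_assoc]
  set z' := Equiv.swap i j * z * Equiv.swap i j with hz'def
  have zi : z' i = z j := by simp [hz'def, s2]
  have zj : z' j = z i := by simp [hz'def, s1]
  have h := ih _ (by omega) z' hz' rfl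
  have h1 := hG.2 z' hz' i j hij (by rw [zi]; exact a4) (by rw [zj]; exact a1)
    (by rw [zi, zj]; exact hlt)
  rw [hww] at h1
  have h2 := divDiff_smul (fpfLen z + 1) h1
  rw [← hl, ← h, hl] at h2
  have h3 : IsDivDiffB i j (gvec hstep (theta n hev) z' : MvPolynomial (Fin n) Rb)
      (C bb * gvec hstep (theta n hev) z) := by
    refine gvec_rec hstep hstep_srel _ i j hij z z' ?_ ?_ ?_
    · intro e; rw [← e] at hl; omega
    · intro y
      by_cases hy0 : IsFPF y
      swap
      · rw [hstep_nfpf hy0]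
        simp only [reduceCtorEq, false_iff]
        rintro (rfl | rfl)
        · exact hy0 hz'
        · exact hy0 hz
      rw [hstep_eq hij hy0, hF]
      split_ifs with hy1 hy
      · simp only [reduceCtorEq, false_iff]
        rintro (rfl | rfl)
        · exact a4 (zi ▸ hy1)
        · exact a2 hy1
      · simp only [Option.some.injEq]
        constructor
        · intro e; right; exact mul_left_cancel (mul_right_cancel e)
        · rintro (rfl | rfl)
          · rw [zi, zj] at hy; exact absurd hlt hy.not_gt
          · rfl
      · simp only [Option.some.injEq]
        constructor
        · intro e; exact Or.inl e
        · rintro (rfl | rfl)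
          · rfl
          · exact absurd hlt hy
    · intro y e
      by_cases hy0 : IsFPF y
      swap
      · rw [hstep_nfpf hy0] at e; simp at e
      rw [hstep_eq hij hy0, hF] at e
      split_ifs at e with hy1 hy
      · obtain ⟨b1, b2, b3, b4⟩ := hy0.asc hij hy
        have e' := Option.some.inj e
        have t1 := Equiv.swap_apply_of_ne_of_ne b1 b2
        have t2 := Equiv.swap_apply_of_ne_of_ne b3 b4
        rw [← e'] at hlt
        simp [t1, t2] at hlt
        exact absurd hlt hy.not_gt
      · obtain rfl := Option.some.inj e
        exact hy hlt
  have h4 := divDiff_unique hij h3 h2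
  rw [pow_succ', mul_assoc] at h4
  exact mul_left_cancel₀ cbb_ne h4

theorem final_of_base (hev : n % 2 = 0)
    (G : Equiv.Perm (Fin n) → MvPolynomial (Fin n) Rb) (hG : IsSpFam n G)
    (Gr : Equiv.Perm (Fin n) → MvPolynomial (Fin n) Rb) (hGr : IsGrothFam n Gr)
    (hb1 : (gvec dem 1 (revPerm n) : MvPolynomial (Fin n) Rb) =
      C bb ^ invLen (revPerm n) * grTop n)
    (hb2 : (gvec hstep (theta n hev) (revPerm n) : MvPolynomial (Fin n) Rb) =
      C bb ^ fpfLen (revPerm n) * spTop n)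
    (z : Equiv.Perm (Fin n)) (hz : IsFPF z) :
    G z = ∑ w ∈ Bfpf n hev z, C (bb ^ (invLen w - fpfLen z)) * Gr w := by
  have h1 := gvec_sum hev z
  rw [sp_all hev G hG hb2 z hz] at h1
  refine mul_left_cancel₀ (pow_ne_zero (fpfLen z) (cbb_ne (n := n))) ?_
  rw [h1, Finset.mul_sum]
  refine Finset.sum_congr rfl fun w hw => ?_
  rw [fk_all Gr hGr hb1, map_pow, ← mul_assoc, ← pow_add,
    Nat.add_sub_cancel' (len_Bfpf hev z w hw)]

end Main

/-! ### Part 8: the top elements -/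

section Base
variable {n : ℕ}

theorem prod_coeff {R : Type*} [CommRing R] (β : R) (L : List (ℕ × R)) :
    (L.map fun p => β * p.2).prod = β ^ L.length * (L.map Prod.snd).prod := by
  induction L with
  | nil => simp
  | cons p L ih => simp only [List.map_cons, List.prod_cons, ih, List.length_cons]; ring

theorem xv_val (a : Fin n) : xv n (a : ℕ) = X a := by
  rw [xv, dif_pos a.isLt]

theorem run_nil {T : Type*} (s : ℕ → T → Option T) (o : Option T) : run s [] o = o := rfl

theorem run_cons {T : Type*} (s : ℕ → T → Option T) (a : ℕ) (l : List ℕ) (t : T) :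
    run s (a :: l) (some t) = run s l (s a t) := rfl

/-- state of the row-by-row computation of the longest permutation. -/
def StD (r q : ℕ) (w : Equiv.Perm (Fin n)) : Prop :=
  ∀ p : Fin n, (w p : ℕ) = if (p : ℕ) < r then n - 1 - p else if (p : ℕ) < q then p - r else
    if (p : ℕ) = q then n - 1 - r else p - 1 - r

theorem swap_val {i j : Fin n} (p : Fin n) :
    (Equiv.swap i j p : ℕ) = if (p : ℕ) = i then (j : ℕ) else if (p : ℕ) = j then (i : ℕ) else p := by
  rw [Equiv.swap_apply_def]
  simp only [Fin.ext_iff]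
  split_ifs <;> rfl

theorem StD_step {r q : ℕ} {w : Equiv.Perm (Fin n)} (hq : q + 1 < n) (hr : r ≤ q)
    (h : StD r (q+1) w) : ∃ w', dem q w = some w' ∧ StD r q w' ∧ invLen w' = invLen w + 1 := by
  obtain ⟨i, j, hij, rfl⟩ : ∃ i j : Fin n, (j : ℕ) = i + 1 ∧ (i : ℕ) = q :=
    ⟨⟨q, by omega⟩, ⟨q+1, hq⟩, rfl, rfl⟩
  have hlt : w i < w j := by
    rw [Fin.lt_def, h i, h j]
    split_ifs <;> omega
  refine ⟨w * Equiv.swap i j, ?_, ?_, invLen_mul_swap w hij hlt⟩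
  · rw [dem_eq hij, demF, if_pos hlt]
  · intro p
    have hp := p.isLt
    rw [Equiv.Perm.mul_apply, h, swap_val]
    split_ifs <;> omega

theorem StD_row {R : Type*} [CommRing R] (x : R) {r : ℕ} (m : ℕ) : ∀ {w : Equiv.Perm (Fin n)}, r + m < n →
    StD r (r+m) w → ∃ w', run dem ((Al r m x).map Prod.fst) (some w) = some w' ∧ StD r r w' ∧
      invLen w' = invLen w + (Al r m x).length := by
  induction m with
  | zero => intro w _ h; exact ⟨w, rfl, h, rfl⟩
  | succ m ih =>
    intro w hm h
    obtain ⟨w', h1, h2, h3⟩ := StD_step (q := r + m) (by omega) (by omega) h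
    obtain ⟨w'', h4, h5, h6⟩ := ih (by omega) h2
    refine ⟨w'', ?_, h5, ?_⟩
    · rw [Al_cons, List.map_cons, run_cons, h1, h4]
    · rw [Al_cons, List.length_cons]; omega

theorem StD_all {R : Type*} [CommRing R] (X : ℕ → R) (m : ℕ) : ∀ {r v : ℕ} {w : Equiv.Perm (Fin n)},
    r + m + 1 = n → StD r (n-1) w →
    ∃ w', run dem ((Ql X r v m).map Prod.fst) (some w) = some w' ∧ StD (n-1) (n-1) w' ∧
      invLen w' = invLen w + (Ql X r v m).length := by
  induction m with
  | zero =>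
    intro r v w hm h
    obtain rfl : r = n - 1 := by omega
    exact ⟨w, rfl, h, rfl⟩
  | succ m ih =>
    intro r v w hm h
    have e : n - 1 = r + (m+1) := by omega
    rw [e] at h
    obtain ⟨w', h1, h2, h3⟩ := StD_row (X v) (m+1) (by omega) h
    have h2' : StD (r+1) (n-1) w' := by
      intro p
      have hp := p.isLt
      rw [h2]
      split_ifs <;> omega
    obtain ⟨w'', h4, h5, h6⟩ := ih (v := v + 1) (by omega) h2'
    refine ⟨w'', ?_, h5, ?_⟩
    · rw [Ql, List.map_append, run_append, h1, h4]
    · rw [Ql, List.length_append]; omega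

theorem Al_prod {R : Type*} [CommRing R] (c m : ℕ) (x : R) :
    ((Al c m x).map Prod.snd).prod = x ^ m := by
  induction m with
  | zero => simp [Al]
  | succ m ih => rw [Al_cons, List.map_cons, List.prod_cons, ih, pow_succ']

theorem Ql_prod {R : Type*} [CommRing R] (X : ℕ → R) (m : ℕ) : ∀ c v : ℕ,
    ((Ql X c v m).map Prod.snd).prod = ∏ t ∈ Finset.range m, X (v + t) ^ (m - t) := by
  induction m with
  | zero => intro c v; simp [Ql]
  | succ m ih =>
    intro c v
    rw [Ql, List.map_append, List.prod_append, Al_prod, ih, Finset.prod_range_succ']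
    rw [mul_comm]
    congr 1
    refine Finset.prod_congr rfl fun t _ => ?_
    rw [show v + (t + 1) = v + 1 + t by omega, show m + 1 - (t + 1) = m - t by omega]

theorem base_dem (hn : 0 < n) : (gvec dem 1 (revPerm n) : MvPolynomial (Fin n) Rb) =
    C bb ^ invLen (revPerm n) * grTop n := by
  obtain ⟨w', h1, h2, h3⟩ := StD_all (n := n) (xv n) (n-1) (r := 0) (v := 0) (w := 1) (by omega) (by
    intro p
    have := p.isLt
    rw [Equiv.Perm.one_apply]
    split_ifs <;> omega)
  have hw : w' = revPerm n := by
    ext p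
    have := p.isLt
    rw [h2]
    simp only [revPerm, Equiv.coe_fn_mk, Fin.val_rev]
    split_ifs <;> omega
  subst hw
  rw [invLen_one, zero_add] at h3
  rw [gvec, wordOp_coeff dem (cb n) invLen (fun a t t' h => dem_some h) _ _ _
    (by rw [invLen_one, h3]; omega), if_pos h1, prod_coeff, h3, Ql_prod]
  congr 1
  obtain ⟨m, rfl⟩ : ∃ m, n = m + 1 := ⟨n - 1, by omega⟩
  have e : grTop (m+1) = ∏ a : Fin (m+1), xv (m+1) (a : ℕ) ^ (m - (a : ℕ)) := by
    refine Finset.prod_congr rfl fun a _ => ?_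
    rw [xv_val]; rfl
  rw [e, Fin.prod_univ_eq_prod_range (fun a => xv (m+1) a ^ (m - a)), Finset.prod_range_succ]
  simp

/-- state of the computation of the longest involution. -/
def ZP (n c q p y : ℕ) : Prop :=
  (p < c ∧ ((p % 2 = 0 ∧ y = p + 1) ∨ (p % 2 = 1 ∧ y + 1 = p))) ∨ (p = c ∧ y = q) ∨ (p = q ∧ y = c) ∨
  (c < p ∧ c < y ∧ ((p < q ∧ y < q ∧ p + y + 1 = n + c) ∨ (p < q ∧ q < y ∧ p + y = n + c) ∨
    (q < p ∧ y < q ∧ p + y = n + c) ∨ (q < p ∧ q < y ∧ p + y = n + 1 + c)))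

def StZ (c q : ℕ) (z : Equiv.Perm (Fin n)) : Prop := ∀ p : Fin n, ZP n c q p (z p)

theorem swap_cases {i j : Fin n} (h : (j : ℕ) = i + 1) (p : Fin n) :
    ((p : ℕ) = i ∧ (Equiv.swap i j p : ℕ) = i + 1) ∨ ((p : ℕ) = i + 1 ∧ (Equiv.swap i j p : ℕ) = i) ∨
      ((p : ℕ) ≠ i ∧ (p : ℕ) ≠ i + 1 ∧ (Equiv.swap i j p : ℕ) = p) := by
  rw [swap_val]
  split_ifs <;> omega

theorem ZP_step {n c q p y p' y' : ℕ} (hc : c < q) (hev : c % 2 = 0) (h : ZP n c q p' y)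
    (hp : (p = q ∧ p' = q + 1) ∨ (p = q + 1 ∧ p' = q) ∨ (p ≠ q ∧ p ≠ q + 1 ∧ p' = p))
    (hy : (y = q ∧ y' = q + 1) ∨ (y = q + 1 ∧ y' = q) ∨ (y ≠ q ∧ y ≠ q + 1 ∧ y' = y)) :
    ZP n c (q+1) p y' := by
  unfold ZP at *
  rcases h with ⟨h1, h | h⟩ | h | h | ⟨h1, h2, h | h | h | h⟩ <;> rcases hp with hp | hp | hp <;>
    rcases hy with hy | hy | hy <;> first | (exfalso; omega) | skip
  all_goals
    first
    | exact Or.inl (by omega)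
    | exact Or.inr (Or.inl (by omega))
    | exact Or.inr (Or.inr (Or.inl (by omega)))
    | exact Or.inr (Or.inr (Or.inr ⟨by omega, by omega, by omega⟩))

/-- reversed from `c` on. -/
def StR (c : ℕ) (z : Equiv.Perm (Fin n)) : Prop :=
  ∀ p : Fin n, (z p : ℕ) = if (p : ℕ) < c then (if (p : ℕ) % 2 = 0 then (p : ℕ) + 1 else p - 1) else
    n - 1 + c - p

theorem ZP_start {n c p y : ℕ} (hp : p < n) (hc : c % 2 = 0) (hn : c + 4 ≤ n)
    (h : y = if p < c + 2 then (if p % 2 = 0 then p + 1 else p - 1) else n - 1 + (c + 2) - p) :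
    ZP n c (c+1) p y := by
  unfold ZP
  rcases lt_trichotomy p c with h1 | h1 | h1
  · refine Or.inl ⟨h1, ?_⟩
    rw [if_pos (by omega)] at h
    split_ifs at h <;> omega
  · refine Or.inr (Or.inl ⟨h1, ?_⟩)
    rw [if_pos (by omega), if_pos (by omega)] at h
    omega
  · by_cases h2 : p = c + 1
    · refine Or.inr (Or.inr (Or.inl ⟨h2, ?_⟩))
      rw [if_pos (by omega), if_neg (by omega)] at h
      omega
    · rw [if_neg (by omega)] at h
      exact Or.inr (Or.inr (Or.inr ⟨by omega, by omega,
        Or.inr (Or.inr (Or.inr ⟨by omega, by omega, by omega⟩))⟩))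

theorem StZ_step {c q : ℕ} {z : Equiv.Perm (Fin n)} (hz : IsFPF z) (hq : q + 1 < n) (hc : c < q)
    (hev : c % 2 = 0) (h : StZ c q z) :
    ∃ z', hstep q z = some z' ∧ IsFPF z' ∧ StZ c (q+1) z' ∧ fpfLen z' = fpfLen z + 1 := by
  obtain ⟨i, j, hij, rfl⟩ : ∃ i j : Fin n, (j : ℕ) = i + 1 ∧ (i : ℕ) = q :=
    ⟨⟨q, by omega⟩, ⟨q+1, hq⟩, rfl, rfl⟩
  have hj := j.isLt
  have hlt : z i < z j := by
    rw [Fin.lt_def]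
    have e1 := h i
    have e2 := h j
    unfold ZP at e1 e2
    omega
  have ha := hz.asc hij hlt
  refine ⟨Equiv.swap i j * z * Equiv.swap i j, ?_, hz.conj i j, ?_, fpfLen_conj hz hij hlt⟩
  · rw [hstep_eq hij hz, hF, if_neg ha.2.1, if_pos hlt]
  · intro p
    have hp := p.isLt
    rw [Equiv.Perm.mul_apply, Equiv.Perm.mul_apply]
    exact ZP_step hc hev (h _) (swap_cases hij p) (swap_cases hij _)

theorem StZ_row {R : Type*} [CommRing R] (β : R) (X : ℕ → R) (y : R) {c : ℕ} (hev : c % 2 = 0) (m : ℕ) :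
    ∀ {q v : ℕ} {z : Equiv.Perm (Fin n)}, IsFPF z → q + m < n → c < q → StZ c q z →
    ∃ z', run hstep ((Cl β X y q v m).map Prod.fst) (some z) = some z' ∧ IsFPF z' ∧ StZ c (q+m) z' ∧
      fpfLen z' = fpfLen z + (Cl β X y q v m).length := by
  induction m with
  | zero => intro q v z hz _ _ h; exact ⟨z, rfl, hz, h, rfl⟩
  | succ m ih =>
    intro q v z hz hq hc h
    obtain ⟨z', h1, h2, h3, h4⟩ := StZ_step hz (by omega) hc hev h
    obtain ⟨z'', h5, h6, h7, h8⟩ := ih (v := v + 1) h2 (by omega) (by omega) h3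
    refine ⟨z'', ?_, h6, ?_, ?_⟩
    · rw [Cl, List.map_cons, run_cons, h1, h5]
    · rwa [show q + (m+1) = q + 1 + m by omega]
    · rw [Cl, List.length_cons]; omega

theorem StZ_all {R : Type*} [CommRing R] (hn : n % 2 = 0) (β : R) (X : ℕ → R) (t : ℕ) : ∀ {c v : ℕ},
    c + 2 * t + 2 = n →
    ∃ z', run hstep ((Sl β X c v t).map Prod.fst) (some (theta n hn)) = some z' ∧ IsFPF z' ∧ StR c z' ∧
      fpfLen z' = (Sl β X c v t).length := by
  induction t with
  | zero =>
    intro c v hc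
    refine ⟨theta n hn, rfl, theta_fpf hn, ?_, fpfLen_theta hn⟩
    intro p
    have hp := p.isLt
    rw [theta_val]
    split_ifs <;> omega
  | succ t ih =>
    intro c v hc
    obtain ⟨z', h1, h2, h3, h4⟩ := ih (c := c + 2) (v := v + 1) (by omega)
    have h3' : StZ c (c+1) z' := by
      intro p
      have hp := p.isLt
      exact ZP_start hp (by omega) (by omega) (h3 p)
    obtain ⟨z'', h5, h6, h7, h8⟩ := StZ_row β X (X v) (c := c) (by omega) (2*t+2) (q := c + 1)
      (v := v + 1) h2 (by omega) (by omega) h3'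
    refine ⟨z'', ?_, h6, ?_, ?_⟩
    · rw [Sl, List.map_append, run_append, h1, h5]
    · intro p
      have hp := p.isLt
      have hp' := (z'' p).isLt
      have e := h7 p
      unfold ZP at e
      split_ifs <;> omega
    · rw [Sl, List.length_append]; omega

theorem Cl_prod {R : Type*} [CommRing R] (β : R) (X : ℕ → R) (y : R) (m : ℕ) : ∀ c v : ℕ,
    ((Cl β X y c v m).map Prod.snd).prod = ∏ s ∈ Finset.range m, opl β (X (v + s)) y := by
  induction m with
  | zero => intro c v; simp [Cl]
  | succ m ih =>
    intro c v
    rw [Cl, List.map_cons, List.prod_cons, ih, Finset.prod_range_succ', mul_comm]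
    congr 1
    refine Finset.prod_congr rfl fun t _ => ?_
    congr 2; omega

theorem Sl_prod {R : Type*} [CommRing R] (β : R) (X : ℕ → R) (t : ℕ) : ∀ c v : ℕ,
    ((Sl β X c v t).map Prod.snd).prod = ∏ i ∈ Finset.range t, ∏ s ∈ Finset.range (2 * (t - i)),
      opl β (X (v + i + 1 + s)) (X (v + i)) := by
  induction t with
  | zero => intro c v; simp [Sl]
  | succ t ih =>
    intro c v
    rw [Sl, List.map_append, List.prod_append, ih, Cl_prod]
    conv_rhs => rw [Finset.prod_range_succ']
    refine congrArg₂ (· * ·) (Finset.prod_congr rfl fun i _ => ?_) rfl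
    rw [show t + 1 - (i + 1) = t - i by omega, show v + (i + 1) = v + 1 + i by omega]

theorem spTop_eq (t : ℕ) (hn : 2 * t + 2 = n) :
    spTop n = ∏ i ∈ Finset.range t, ∏ s ∈ Finset.range (2 * (t - i)),
      opl (cb n) (xv n (0 + i + 1 + s)) (xv n (0 + i)) := by
  have e : spTop n = ∏ a : Fin n, ∏ b : Fin n,
      if (a : ℕ) < b ∧ (a : ℕ) + b + 2 ≤ n then opl (cb n) (xv n (b : ℕ)) (xv n (a : ℕ)) else 1 := by
    rw [spTop, Finset.prod_filter, Fintype.prod_prod_type]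
    refine Finset.prod_congr rfl fun a _ => Finset.prod_congr rfl fun b _ => ?_
    rw [xv_val, xv_val]
    have e1 : oplus a b = opl (cb n) (X b) (X a) := by
      simp only [oplus, opl, cb]; ring
    rw [e1]; rfl
  rw [e, Fin.prod_univ_eq_prod_range (fun a => ∏ b : Fin n,
      if a < (b : ℕ) ∧ a + (b : ℕ) + 2 ≤ n then opl (cb n) (xv n (b : ℕ)) (xv n a) else 1)]
  have e2 : ∀ a, (∏ b : Fin n,
      if a < (b : ℕ) ∧ a + (b : ℕ) + 2 ≤ n then opl (cb n) (xv n (b : ℕ)) (xv n a) else 1) =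
      ∏ s ∈ Finset.range (2 * (t - a)), opl (cb n) (xv n (0 + a + 1 + s)) (xv n (0 + a)) := by
    intro a
    rw [Fin.prod_univ_eq_prod_range (fun b =>
      if a < b ∧ a + b + 2 ≤ n then opl (cb n) (xv n b) (xv n a) else 1), ← Finset.prod_filter]
    have : (Finset.range n).filter (fun b => a < b ∧ a + b + 2 ≤ n) = Finset.Ico (a+1) (n - 1 - a) := by
      ext b
      simp only [Finset.mem_filter, Finset.mem_range, Finset.mem_Ico]
      omega
    rw [this, Finset.prod_Ico_eq_prod_range, show n - 1 - a - (a + 1) = 2 * (t - a) by omega, zero_add]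
  simp only [e2]
  symm
  refine Finset.prod_subset ?_ ?_
  · intro a; simp only [Finset.mem_range]; omega
  · intro a _ ha
    simp only [Finset.mem_range] at ha
    rw [show t - a = 0 by omega]; simp

theorem hstep_theta0 (hev : n % 2 = 0) (a : ℕ) (ha : a % 2 = 0) : hstep a (theta n hev) = none := by
  by_cases hn : a + 1 < n
  swap
  · exact hstep_none hn _
  obtain ⟨i, j, hij, rfl⟩ : ∃ i j : Fin n, (j : ℕ) = i + 1 ∧ (i : ℕ) = a :=
    ⟨⟨a, by omega⟩, ⟨a+1, hn⟩, rfl, rfl⟩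
  rw [hstep_eq hij (theta_fpf hev), hF, if_pos]
  apply Fin.ext
  rw [theta_val, if_pos ha, hij]

theorem hstep_theta1 (hev : n % 2 = 0) (a : ℕ) (ha : a % 2 = 0) :
    (hstep (a+1) (theta n hev)).bind (hstep a) = (hstep (a+1) (theta n hev)).bind (hstep (a+2)) := by
  by_cases hn : a + 1 + 1 < n
  swap
  · rw [hstep_none hn]; rfl
  obtain ⟨i, j, k, l, hij, hjk, hkl, rfl⟩ : ∃ i j k l : Fin n, (j : ℕ) = i + 1 ∧ (k : ℕ) = j + 1 ∧
      (l : ℕ) = k + 1 ∧ (i : ℕ) = a :=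
    ⟨⟨a, by omega⟩, ⟨a+1, by omega⟩, ⟨a+2, hn⟩, ⟨a+3, by omega⟩, rfl, rfl, rfl, rfl⟩
  rw [show (i : ℕ) + 2 = k by omega, show (i : ℕ) + 1 = j by omega]
  have hθ := theta_fpf hev
  set θ := theta n hev with hθd
  have t1 : θ i = j := by apply Fin.ext; rw [theta_val, if_pos ha, hij]
  have t2 : θ j = i := by rw [← t1, hθ.app]
  have t3 : θ k = l := by apply Fin.ext; rw [theta_val, if_pos (by omega), hkl]
  have t4 : θ l = k := by rw [← t3, hθ.app]
  have l1 : i < j := by rw [Fin.lt_def]; omega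
  have l2 : j < k := by rw [Fin.lt_def]; omega
  have l3 : k < l := by rw [Fin.lt_def]; omega
  have l4 := l1.trans l2
  have l5 := l4.trans l3
  have l6 := l2.trans l3
  have s1 := Equiv.swap_apply_of_ne_of_ne l1.ne l4.ne
  have s2 := Equiv.swap_apply_of_ne_of_ne l6.ne' l3.ne'
  rw [hstep_eq hjk hθ, hF, t2, t3, if_neg l4.ne, if_pos l5, Option.bind_some, Option.bind_some,
    hstep_eq hij (hθ.conj j k), hstep_eq hkl (hθ.conj j k)]
  have u1 : (Equiv.swap j k * θ * Equiv.swap j k) i = k := by simp [s1, t1]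
  have u2 : (Equiv.swap j k * θ * Equiv.swap j k) j = l := by simp [t3, s2]
  have u3 : (Equiv.swap j k * θ * Equiv.swap j k) k = i := by simp [t2, s1]
  have u4 : (Equiv.swap j k * θ * Equiv.swap j k) l = j := by simp [s2, t4]
  have hφ := hθ.conj j k
  set φ := Equiv.swap j k * θ * Equiv.swap j k
  rw [hF, hF, u1, u2, u3, u4, if_neg l2.ne', if_pos l3, if_neg l5.ne, if_pos l1]
  congr 1
  have a1 := Equiv.swap_apply_of_ne_of_ne l4.ne' l2.ne'
  have a2 := Equiv.swap_apply_of_ne_of_ne l5.ne' l6.ne'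
  have a3 := Equiv.swap_apply_of_ne_of_ne l4.ne l5.ne
  have a4 := Equiv.swap_apply_of_ne_of_ne l2.ne l6.ne
  ext x
  simp only [Equiv.Perm.mul_apply]
  by_cases hx1 : x = i
  · subst hx1; simp [u1, u2, a1, a2, a3, a4]
  by_cases hx2 : x = j
  · subst hx2; simp [u1, u2, a1, a2, a3, a4]
  by_cases hx3 : x = k
  · subst hx3; simp [u3, u4, a1, a2, a3, a4]
  by_cases hx4 : x = l
  · subst hx4; simp [u3, u4, a1, a2, a3, a4]
  rw [Equiv.swap_apply_of_ne_of_ne hx3 hx4, Equiv.swap_apply_of_ne_of_ne hx1 hx2,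
    Equiv.swap_apply_of_ne_of_ne, Equiv.swap_apply_of_ne_of_ne]
  · intro e; apply hx1; rw [← u3, ← e, hφ.app]
  · intro e; apply hx2; rw [← u4, ← e, hφ.app]
  · intro e; apply hx3; rw [← u1, ← e, hφ.app]
  · intro e; apply hx4; rw [← u2, ← e, hφ.app]

theorem opF_bind_single {R T : Type*} [CommRing R] [Fintype T] [DecidableEq T] (F : T → Option T)
    (t : T) : (opF F (Pi.single t (1:R)) : T → R) = fun w => if F t = some w then 1 else 0 :=
  funext fun w => opF_single F t w

theorem base_hstep (hn : 0 < n) (hev : n % 2 = 0) :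
    (gvec hstep (theta n hev) (revPerm n) : MvPolynomial (Fin n) Rb) =
      C bb ^ fpfLen (revPerm n) * spTop n := by
  obtain ⟨t, ht⟩ : ∃ t, 2 * t + 2 = n := ⟨n / 2 - 1, by omega⟩
  have hQ := Q_theta (R := MvPolynomial (Fin n) Rb) (β := cb n)
    (u := fun a => (opF (hstep (n := n) a) : Module.End (MvPolynomial (Fin n) Rb) _))
    (θ := Pi.single (theta n hev) 1) hstep_srel.hrel
    (by
      intro a ha
      rw [opF_bind_single, hstep_theta0 hev a ha]
      funext w; simp)
    (by
      intro a ha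
      rw [opF_comp, opF_comp, opF_bind_single, opF_bind_single, hstep_theta1 hev a ha])
    (xv n) 0 0 rfl t
  obtain ⟨z', h1, h2, h3, h4⟩ := StZ_all (n := n) hev (cb n) (xv n) t (c := 0) (v := 0) (by omega)
  have hw : z' = revPerm n := by
    ext p
    have := p.isLt
    rw [h3]
    simp only [revPerm, Equiv.coe_fn_mk, Fin.val_rev]
    split_ifs <;> omega
  subst hw
  rw [gvec, show n - 1 = 2 * t + 1 by omega, hQ,
    wordOp_coeff hstep (cb n) fpfLen (fun a t t' h => (hstep_some h).2.2) _ _ _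
    (by rw [fpfLen_theta, h4]; omega), if_pos h1, prod_coeff, h4, Sl_prod, spTop_eq t ht]
  rfl

end Base
theorem statement2 (n : ℕ) (hpos : 0 < n) (hev : n % 2 = 0)
    (G : Equiv.Perm (Fin n) → MvPolynomial (Fin n) Rb) (hG : IsSpFam n G)
    (Gr : Equiv.Perm (Fin n) → MvPolynomial (Fin n) Rb) (hGr : IsGrothFam n Gr)
    (z : Equiv.Perm (Fin n)) (hz : IsFPF z) :
    (∀ w ∈ Bfpf n hev z, fpfLen z ≤ invLen w) ∧
      G z = ∑ w ∈ Bfpf n hev z, C (bb ^ (invLen w - fpfLen z)) * Gr w := by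
  exact ⟨fun w hw => len_Bfpf hev z w hw,
    final_of_base hev G hG Gr hGr (base_dem hpos) (base_hstep hpos hev) z hz⟩

end
end
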